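/- arXiv:2110.14176 — 4 statements merged into one kernel-verified Lean document; each statement's English description precedes it below -/
import Mathlib

section
/- Let (G,σ) be a signed graph, let x and y be vertices of G, and let W be an (x–y)-walk of length p in (G,σ). If W is positive, then in EDC(G,σ) there exist an (x⁺–y⁺)-walk and an (x⁻–y⁻)-walk, both positive and of length p, and an (x⁺–y⁻)-walk and an (x⁻–y⁺)-walk, both negative and of length p+1. If W is negative, then in EDC(G,σ) there exist an (x⁺–y⁻)-walk and an (x⁻–y⁺)-walk, both positive and of length p, and an (x⁺–y⁺)-walk and an (x⁻–y⁻)-walk, both negative and of length p+1. -/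
open SimpleGraph

namespace SignedPaper

variable {V : Type*} {W : Type*}

/-- The product of the signs (values of `σ`) along the darts of a walk. -/
def walkSign {G : SimpleGraph V} (σ : V → V → ℤ) {a b : V} (w : G.Walk a b) : ℤ :=
  (w.darts.map fun d => σ d.toProd.1 d.toProd.2).prod

/-- The length of a walk in a weighted signed graph: the sum of the absolute
values of the weights of its edges, with multiplicity. -/
def walkWLen {G : SimpleGraph V} (ω : V → V → ℤ) {a b : V} (w : G.Walk a b) : ℕ :=
  (w.darts.map fun d => (ω d.toProd.1 d.toProd.2).natAbs).sum

/-- Walk-girth of type `ij` of a signed graph: the length of a shortest closed walk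
which is negative iff `neg` and of odd length iff `odd` (`⊤` if none exists). -/
noncomputable def sGirth (G : SimpleGraph V) (σ : V → V → ℤ) (neg odd : Bool) : ℕ∞ :=
  sInf {n : ℕ∞ | ∃ (a : V) (w : G.Walk a a), (w.length : ℕ∞) = n ∧
    (walkSign σ w < 0 ↔ neg = true) ∧ (Odd w.length ↔ odd = true)}

/-- Walk-girth of type `ij` of a weighted signed graph. -/
noncomputable def wGirth (G : SimpleGraph V) (ω : V → V → ℤ) (neg odd : Bool) : ℕ∞ :=
  sInf {n : ℕ∞ | ∃ (a : V) (w : G.Walk a a), (walkWLen ω w : ℕ∞) = n ∧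
    (walkSign ω w < 0 ↔ neg = true) ∧ (Odd (walkWLen ω w) ↔ odd = true)}

/-- A graph homomorphism is a homomorphism of signed graphs if it preserves
the signs of all closed walks. -/
def IsSignedHom {G : SimpleGraph V} {H : SimpleGraph W} (σ : V → V → ℤ) (π : W → W → ℤ)
    (f : G →g H) : Prop :=
  ∀ (a : V) (w : G.Walk a a), walkSign π (w.map f) = walkSign σ w

/-- A signed graph is `g`-wide if it has no positive closed walk of odd length, and
every negative closed walk has length at least `g` and of the same parity as `g`. -/
def gWide (G : SimpleGraph V) (σ : V → V → ℤ) (g : ℕ) : Prop :=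
  (∀ (a : V) (w : G.Walk a a), 0 < walkSign σ w → ¬ Odd w.length) ∧
  (∀ (a : V) (w : G.Walk a a), walkSign σ w < 0 → g ≤ w.length ∧ (Odd w.length ↔ Odd g))

open Classical in
/-- The algebraic distance between two vertices of a signed graph. -/
noncomputable def adist (G : SimpleGraph V) (σ : V → V → ℤ) (u v : V) : ℤ :=
  if ∃ w : G.Walk u v, w.IsPath ∧ w.length = G.dist u v ∧ 0 < walkSign σ w
  then (G.dist u v : ℤ) else -(G.dist u v : ℤ)

/-- The underlying graph of the Extended Double Cover of a signed graph:
`(v, true)` plays the role of `v⁺` and `(v, false)` of `v⁻`. -/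
def EDCsg (G : SimpleGraph V) (σ : V → V → ℤ) (hσ : ∀ u v, σ u v = σ v u) :
    SimpleGraph (V × Bool) where
  Adj x y := (x.1 = y.1 ∧ x.2 ≠ y.2) ∨ (G.Adj x.1 y.1 ∧ (x.2 = y.2 ↔ 0 < σ x.1 y.1))
  symm.symm := fun x y h => by
    rcases h with ⟨h1, h2⟩ | ⟨ha, hb⟩
    · exact Or.inl ⟨h1.symm, h2.symm⟩
    · refine Or.inr ⟨ha.symm, ?_⟩
      rw [hσ y.1 x.1, eq_comm]
      exact hb
  loopless.irrefl := fun x h => by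
    rcases h with ⟨-, h⟩ | ⟨h, -⟩
    · exact h rfl
    · exact G.loopless.irrefl _ h

open Classical in
/-- The signature of the Extended Double Cover: edges `v⁺v⁻` are negative,
all other edges are positive. -/
noncomputable def edcSign : V × Bool → V × Bool → ℤ := fun x y =>
  if x.1 = y.1 then -1 else 1

/-- The underlying graph of the Extended Double Cover of a weighted signed graph. -/
def EDCw (G : SimpleGraph V) : SimpleGraph (V × Bool) where
  Adj x y := (x.1 = y.1 ∧ x.2 ≠ y.2) ∨ G.Adj x.1 y.1
  symm.symm := fun x y h => by
    rcases h with ⟨h1, h2⟩ | h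
    · exact Or.inl ⟨h1.symm, h2.symm⟩
    · exact Or.inr h.symm
  loopless.irrefl := fun x h => by
    rcases h with ⟨-, h⟩ | h
    · exact h rfl
    · exact G.loopless.irrefl _ h

open Classical in
/-- The weights of the Extended Double Cover of a weighted signed graph `(G, ω)`. -/
noncomputable def EDCwWeight (ω : V → V → ℤ) : V × Bool → V × Bool → ℤ := fun x y =>
  if x.1 = y.1 then -1
  else if x.2 = y.2 then (if 0 < ω x.1 y.1 then ω x.1 y.1 else ω x.1 y.1 - 1)
  else (if 0 < ω x.1 y.1 then -(ω x.1 y.1 + 1) else -(ω x.1 y.1))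

/-- `G` has a `K₄`-minor: there are four disjoint nonempty connected branch sets,
pairwise joined by an edge. -/
def HasK4Minor (G : SimpleGraph V) : Prop :=
  ∃ S : Fin 4 → Set V,
    (∀ i, (G.induce (S i)).Connected) ∧
    (∀ i j, i ≠ j → Disjoint (S i) (S j)) ∧
    (∀ i j, i ≠ j → ∃ u ∈ S i, ∃ v ∈ S j, G.Adj u v)

/-- A signed graph `(B, π)` is SP-complete if every connected signed graph whose
underlying graph is finite and `K₄`-minor-free and which satisfies the conclusion of
the no-homomorphism lemma with respect to `(B, π)` admits a homomorphism to `(B, π)`. -/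
def SPComplete (B : SimpleGraph W) (π : W → W → ℤ) : Prop :=
  ∀ (V' : Type) (G : SimpleGraph V') (σ : V' → V' → ℤ),
    Finite V' → (∀ u v, σ u v = σ v u) →
    (∀ u v, G.Adj u v → σ u v = 1 ∨ σ u v = -1) →
    G.Connected → ¬ HasK4Minor G →
    (∀ neg odd : Bool, sGirth B π neg odd ≤ sGirth G σ neg odd) →
    ∃ f : G →g B, IsSignedHom σ π f

/-- The cylinder `C_{2a} □ P_b` on vertex set `{0,…,2a-1} × {0,…,b-1}`. -/
def cylT (a b : ℕ) : SimpleGraph (Fin (2 * a) × Fin b) where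
  Adj x y := (x.1 = y.1 ∧ ((x.2.val : ℤ) - (y.2.val : ℤ)).natAbs = 1) ∨
    (x.2 = y.2 ∧ (((x.1.val : ℤ) - (y.1.val : ℤ)).natAbs = 1 ∨
      ((x.1.val : ℤ) - (y.1.val : ℤ)).natAbs = 2 * a - 1))
  symm.symm := fun x y h => by
    rcases h with ⟨h1, h2⟩ | ⟨h1, h2 | h2⟩
    · exact Or.inl ⟨h1.symm, by omega⟩
    · exact Or.inr ⟨h1.symm, Or.inl (by omega)⟩
    · exact Or.inr ⟨h1.symm, Or.inr (by omega)⟩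
  loopless.irrefl := fun x h => by
    have hpos : 0 < 2 * a := x.1.pos
    rcases h with ⟨-, h⟩ | ⟨-, h | h⟩ <;> omega

/-- Two vertices of the cylinder are antipodal if `|Δi| + |Δj| = a + b - 1`. -/
def antip (a b : ℕ) (x y : Fin (2 * a) × Fin b) : Prop :=
  ((x.1.val : ℤ) - (y.1.val : ℤ)).natAbs + ((x.2.val : ℤ) - (y.2.val : ℤ)).natAbs = a + b - 1

/-- The twisted tube: the cylinder together with the antipodal edges `J`. -/
def twistedTube (a b : ℕ) : SimpleGraph (Fin (2 * a) × Fin b) where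
  Adj x y := (cylT a b).Adj x y ∨ (x ≠ y ∧ antip a b x y)
  symm.symm := fun x y h => by
    rcases h with h | ⟨hne, h⟩
    · exact Or.inl ((cylT a b).symm.symm _ _ h)
    · refine Or.inr ⟨hne.symm, ?_⟩
      unfold antip at h ⊢
      omega
  loopless.irrefl := fun x h => by
    rcases h with h | ⟨hne, -⟩
    · exact (cylT a b).loopless.irrefl x h
    · exact hne rfl

/-- The signature of the twisted tube: antipodal edges (the set `J`) are negative,
all other edges are positive. -/
def ttSign (a b : ℕ) (x y : Fin (2 * a) × Fin b) : ℤ :=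
  if ((x.1.val : ℤ) - (y.1.val : ℤ)).natAbs + ((x.2.val : ℤ) - (y.2.val : ℤ)).natAbs
      = a + b - 1 then -1 else 1

/-- The underlying graph of the signed projective cube `SPC(k)`: vertices are elements
of `ℤ₂^k`, adjacent if they differ in exactly one coordinate or in all coordinates. -/
def spcGraph (k : ℕ) : SimpleGraph (Fin k → ZMod 2) where
  Adj x y := x ≠ y ∧ (hammingDist x y = 1 ∨ hammingDist x y = k)
  symm.symm := fun x y h => ⟨h.1.symm, by rw [hammingDist_comm]; exact h.2⟩
  loopless.irrefl := fun x h => h.1 rfl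

/-- The signature of `SPC(k)`: an edge is negative iff its endpoints differ in
all coordinates. -/
def spcSign (k : ℕ) (x y : Fin k → ZMod 2) : ℤ :=
  if hammingDist x y = k then -1 else 1

lemma spcSign_symm (k : ℕ) : ∀ x y : Fin k → ZMod 2, spcSign k x y = spcSign k y x := by
  intro x y
  unfold spcSign
  rw [hammingDist_comm]

/-- The function `f_g`. -/
def fg (g : ℕ) (x : ℤ) : ℤ := if 0 < x then x else (g : ℤ) + x

/-- `(G, σ)` is (a realization of) the signed graph `T_g(p,q,r)`: three distinguished
vertices `x, y, z` joined by six internally disjoint paths of prescribed lengths and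
signs, whose edges exhaust `G`. -/
def IsTgpqr (G : SimpleGraph V) (σ : V → V → ℤ) (g : ℕ) (p q r : ℤ) : Prop :=
  ∃ (x y z : V) (P1 P2 : G.Walk x y) (Q1 Q2 : G.Walk y z) (R1 R2 : G.Walk z x),
    x ≠ y ∧ y ≠ z ∧ z ≠ x ∧
    P1.IsPath ∧ P2.IsPath ∧ Q1.IsPath ∧ Q2.IsPath ∧ R1.IsPath ∧ R2.IsPath ∧
    P1.length = p.natAbs ∧ P2.length = g - p.natAbs ∧
    Q1.length = q.natAbs ∧ Q2.length = g - q.natAbs ∧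
    R1.length = r.natAbs ∧ R2.length = g - r.natAbs ∧
    walkSign σ P1 = Int.sign p ∧ walkSign σ P2 = -Int.sign p ∧
    walkSign σ Q1 = Int.sign q ∧ walkSign σ Q2 = -Int.sign q ∧
    walkSign σ R1 = Int.sign r ∧ walkSign σ R2 = -Int.sign r ∧
    (∀ e ∈ G.edgeSet, e ∈ P1.edges ∨ e ∈ P2.edges ∨ e ∈ Q1.edges ∨ e ∈ Q2.edges ∨
      e ∈ R1.edges ∨ e ∈ R2.edges) ∧
    (∀ i j : Fin 6, i ≠ j → ∀ v : V,
      v ∈ (![{v | v ∈ P1.support}, {v | v ∈ P2.support}, {v | v ∈ Q1.support},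
            {v | v ∈ Q2.support}, {v | v ∈ R1.support}, {v | v ∈ R2.support}] : Fin 6 → Set V) i →
      v ∈ (![{v | v ∈ P1.support}, {v | v ∈ P2.support}, {v | v ∈ Q1.support},
            {v | v ∈ Q2.support}, {v | v ∈ R1.support}, {v | v ∈ R2.support}] : Fin 6 → Set V) j →
      v = x ∨ v = y ∨ v = z)


lemma walkSign_cons' {U : Type*} {G : SimpleGraph U} (σ : U → U → ℤ) {a b c : U} (h : G.Adj a b)
    (w : G.Walk b c) : walkSign σ (Walk.cons h w) = σ a b * walkSign σ w := by
  simp [walkSign]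

lemma lift_aux {U : Type*} (G : SimpleGraph U) (σ : U → U → ℤ)
    (hsymm : ∀ u v, σ u v = σ v u) (hpm : ∀ u v, G.Adj u v → σ u v = 1 ∨ σ u v = -1)
    {x y : U} (P : G.Walk x y) : ∀ b : Bool,
    (walkSign σ P = 1 → ∃ w : (EDCsg G σ hsymm).Walk (x, b) (y, b),
        w.length = P.length ∧ walkSign edcSign w = 1) ∧
    (walkSign σ P = -1 → ∃ w : (EDCsg G σ hsymm).Walk (x, b) (y, !b),
        w.length = P.length ∧ walkSign edcSign w = 1) := by
  induction P with
  | nil =>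
    intro b
    refine ⟨fun _ => ⟨Walk.nil, rfl, by simp [walkSign]⟩, fun h => ?_⟩
    simp [walkSign] at h
  | @cons u v t h q ih =>
    intro b
    have hs : ∀ c d : Bool, edcSign (u, c) (v, d) = 1 := by
      intro c d
      simp [edcSign, h.ne]
    rw [walkSign_cons']
    rcases hpm u v h with h1 | h1
    · have ha : (EDCsg G σ hsymm).Adj (u, b) (v, b) := Or.inr ⟨h, by simp [h1]⟩
      rw [h1, one_mul]
      constructor
      · intro hq
        obtain ⟨w, hl, hw⟩ := (ih b).1 hq
        exact ⟨Walk.cons ha w, by simp [hl], by rw [walkSign_cons', hs, hw, one_mul]⟩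
      · intro hq
        obtain ⟨w, hl, hw⟩ := (ih b).2 hq
        exact ⟨Walk.cons ha w, by simp [hl], by rw [walkSign_cons', hs, hw, one_mul]⟩
    · have ha : (EDCsg G σ hsymm).Adj (u, b) (v, !b) := Or.inr ⟨h, by simp [h1]⟩
      rw [h1]
      constructor
      · intro hq
        have hex := (ih (!b)).2 (by linarith)
        rw [Bool.not_not] at hex
        obtain ⟨w, hl, hw⟩ := hex
        exact ⟨Walk.cons ha w, by simp [hl], by rw [walkSign_cons', hs, hw, one_mul]⟩
      · intro hq
        obtain ⟨w, hl, hw⟩ := (ih (!b)).1 (by linarith)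
        exact ⟨Walk.cons ha w, by simp [hl], by rw [walkSign_cons', hs, hw, one_mul]⟩

lemma lift_flip {U : Type*} (G : SimpleGraph U) (σ : U → U → ℤ)
    (hsymm : ∀ u v, σ u v = σ v u) {x y : U} {b c d : Bool} {p : ℕ} (hbc : b ≠ c)
    (h : ∃ w : (EDCsg G σ hsymm).Walk (x, c) (y, d), w.length = p ∧ walkSign edcSign w = 1) :
    ∃ w : (EDCsg G σ hsymm).Walk (x, b) (y, d),
      w.length = p + 1 ∧ walkSign edcSign w = -1 := by
  obtain ⟨w, hl, hw⟩ := h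
  have ha : (EDCsg G σ hsymm).Adj (x, b) (x, c) := Or.inl ⟨rfl, hbc⟩
  exact ⟨Walk.cons ha w, by simp [hl], by rw [walkSign_cons', hw]; simp [edcSign]⟩

/-- lifts of a walk to the Extended Double Cover. If `W` is a positive
`(x–y)`-walk of length `p` in `(G,σ)`, then `EDC(G,σ)` has positive `(x⁺–y⁺)`- and
`(x⁻–y⁻)`-walks of length `p` and negative `(x⁺–y⁻)`- and `(x⁻–y⁺)`-walks of length
`p+1`; if `W` is negative, the same holds with the roles of the pairs exchanged. -/
theorem EDC_walk_lifts {V : Type*} [Fintype V]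
    (G : SimpleGraph V) (σ : V → V → ℤ)
    (hsymm : ∀ u v, σ u v = σ v u) (hpm : ∀ u v, G.Adj u v → σ u v = 1 ∨ σ u v = -1)
    (x y : V) (p : ℕ) (W : G.Walk x y) (hlen : W.length = p) :
    (walkSign σ W = 1 →
      (∃ w : (EDCsg G σ hsymm).Walk (x, true) (y, true),
        w.length = p ∧ walkSign edcSign w = 1) ∧
      (∃ w : (EDCsg G σ hsymm).Walk (x, false) (y, false),
        w.length = p ∧ walkSign edcSign w = 1) ∧
      (∃ w : (EDCsg G σ hsymm).Walk (x, true) (y, false),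
        w.length = p + 1 ∧ walkSign edcSign w = -1) ∧
      (∃ w : (EDCsg G σ hsymm).Walk (x, false) (y, true),
        w.length = p + 1 ∧ walkSign edcSign w = -1)) ∧
    (walkSign σ W = -1 →
      (∃ w : (EDCsg G σ hsymm).Walk (x, true) (y, false),
        w.length = p ∧ walkSign edcSign w = 1) ∧
      (∃ w : (EDCsg G σ hsymm).Walk (x, false) (y, true),
        w.length = p ∧ walkSign edcSign w = 1) ∧
      (∃ w : (EDCsg G σ hsymm).Walk (x, true) (y, true),
        w.length = p + 1 ∧ walkSign edcSign w = -1) ∧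
      (∃ w : (EDCsg G σ hsymm).Walk (x, false) (y, false),
        w.length = p + 1 ∧ walkSign edcSign w = -1)) := by
  subst hlen
  have ht := lift_aux G σ hsymm hpm W true
  have hf := lift_aux G σ hsymm hpm W false
  exact ⟨fun h => ⟨ht.1 h, hf.1 h, lift_flip G σ hsymm (by simp) (hf.1 h),
      lift_flip G σ hsymm (by simp) (ht.1 h)⟩,
    fun h => ⟨ht.2 h, hf.2 h, lift_flip G σ hsymm (by simp) (hf.2 h),
      lift_flip G σ hsymm (by simp) (ht.2 h)⟩⟩

end SignedPaper
end

section
/- Let g be a positive integer, let (G,σ) be a g-wide signed graph, and let C be a negative cycle of length g in (G,σ). Then for any two vertices u and v of C, the distance between u and v in G equals their distance along the cycle C, that is, d_G(u,v) = d_C(u,v). -/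
open SimpleGraph

namespace SignedPaper

variable {V : Type*} {W : Type*}

lemma walkSign_append {G : SimpleGraph V} (σ : V → V → ℤ) {a b c : V}
    (p : G.Walk a b) (q : G.Walk b c) :
    walkSign σ (p.append q) = walkSign σ p * walkSign σ q := by
  simp [walkSign, SimpleGraph.Walk.darts_append]

lemma walkSign_reverse {G : SimpleGraph V} (σ : V → V → ℤ)
    (hsymm : ∀ u v, σ u v = σ v u) {a b : V} (p : G.Walk a b) :
    walkSign σ p.reverse = walkSign σ p := by
  unfold walkSign
  rw [SimpleGraph.Walk.darts_reverse, List.map_reverse, List.prod_reverse, List.map_map]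
  congr 1
  apply List.map_congr_left
  intro d _
  exact hsymm _ _

lemma walkSign_pm {G : SimpleGraph V} (σ : V → V → ℤ)
    (hpm : ∀ u v, G.Adj u v → σ u v = 1 ∨ σ u v = -1) {a b : V} (p : G.Walk a b) :
    walkSign σ p = 1 ∨ walkSign σ p = -1 := by
  induction p with
  | nil => left; simp [walkSign]
  | @cons a c b h p ih =>
    have : walkSign σ (SimpleGraph.Walk.cons h p) = σ a c * walkSign σ p := by
      simp [walkSign]
    rw [this]
    rcases hpm _ _ h with h1 | h1 <;> rcases ih with h2 | h2 <;> rw [h1, h2] <;> simp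

lemma exists_coe_walk {G : SimpleGraph V} (H : G.Subgraph) {a b : V} (p : G.Walk a b)
    (hp : ∀ e ∈ p.edges, e ∈ H.edgeSet) (ha : a ∈ H.verts) (hb : b ∈ H.verts) :
    ∃ q : H.coe.Walk ⟨a, ha⟩ ⟨b, hb⟩, q.length = p.length := by
  induction p with
  | nil => exact ⟨SimpleGraph.Walk.nil, rfl⟩
  | @cons a c b h p ih =>
    have hac : H.Adj a c := by
      have := hp s(a, c) (by simp)
      simpa using this
    obtain ⟨q, hq⟩ := ih (fun e he => hp e (by simp [he])) hac.snd_mem hb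
    have hadj : H.coe.Adj ⟨a, ha⟩ ⟨c, hac.snd_mem⟩ := hac
    exact ⟨SimpleGraph.Walk.cons hadj q, by simp [hq]⟩

/-- in a `g`-wide signed graph, the distance in `G` between two
vertices of a negative cycle `C` of length `g` equals their distance along `C`. -/
theorem dist_eq_dist_on_negative_cycle {V : Type*} [Fintype V]
    (G : SimpleGraph V) (σ : V → V → ℤ)
    (hsymm : ∀ u v, σ u v = σ v u) (hpm : ∀ u v, G.Adj u v → σ u v = 1 ∨ σ u v = -1)
    (g : ℕ) (hg : 0 < g) (hwide : gWide G σ g)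
    (x : V) (C : G.Walk x x) (hC : C.IsCycle) (hlen : C.length = g)
    (hneg : walkSign σ C = -1)
    (u v : V) (hu : u ∈ C.toSubgraph.verts) (hv : v ∈ C.toSubgraph.verts) :
    G.dist u v = C.toSubgraph.coe.dist ⟨u, hu⟩ ⟨v, hv⟩ := by
  classical
  have hu' : u ∈ C.support := by simpa using hu
  have hv' : v ∈ (C.rotate u hu').support := by
    rw [SimpleGraph.Walk.mem_support_rotate_iff]
    simpa using hv
  have hedges : ∀ e ∈ (C.rotate u hu').edges, e ∈ C.toSubgraph.edgeSet := by
    intro e he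
    rw [SimpleGraph.Walk.mem_edges_toSubgraph]
    exact (C.rotate_edges u hu').mem_iff.mp he
  have hsign : walkSign σ (C.rotate u hu') = -1 := by
    rw [← hneg, SimpleGraph.Walk.rotate, walkSign_append, mul_comm, ← walkSign_append,
      SimpleGraph.Walk.take_spec]
  have hl : (C.rotate u hu').length = g := by
    rw [← hlen, SimpleGraph.Walk.length_rotate]
  obtain ⟨A, B, hAB⟩ : ∃ (A : G.Walk u v) (B : G.Walk v u),
      A.append B = C.rotate u hu' := ⟨_, _, SimpleGraph.Walk.take_spec _ hv'⟩
  rw [← hAB] at hedges hsign hl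
  rw [walkSign_append] at hsign
  rw [SimpleGraph.Walk.length_append] at hl
  obtain ⟨A', hA'⟩ := exists_coe_walk C.toSubgraph A
    (fun e he => hedges e (by simp [SimpleGraph.Walk.edges_append, he])) hu hv
  obtain ⟨B', hB'⟩ := exists_coe_walk C.toSubgraph B
    (fun e he => hedges e (by simp [SimpleGraph.Walk.edges_append, he])) hv hu
  have hDA := SimpleGraph.dist_le A'
  have hDB := SimpleGraph.dist_le B'
  rw [SimpleGraph.dist_comm] at hDB
  apply le_antisymm
  · obtain ⟨Q, hQ⟩ := A'.reachable.exists_walk_length_eq_dist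
    rw [← hQ, ← SimpleGraph.Walk.length_map C.toSubgraph.hom Q]
    exact SimpleGraph.dist_le (Q.map C.toSubgraph.hom)
  · obtain ⟨P, hP⟩ := A.reachable.exists_walk_length_eq_dist
    have h1 := hwide.2 _ (A.append P.reverse)
    have h2 := hwide.2 _ (P.append B)
    rw [walkSign_append, walkSign_reverse σ hsymm, SimpleGraph.Walk.length_append,
      SimpleGraph.Walk.length_reverse] at h1
    rw [walkSign_append, SimpleGraph.Walk.length_append] at h2
    rcases walkSign_pm σ hpm A with a | a <;> rcases walkSign_pm σ hpm B with b | b <;>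
      rcases walkSign_pm σ hpm P with p | p <;> rw [a, b] at hsign <;>
      rw [a, p] at h1 <;> rw [p, b] at h2 <;> 
      (replace h1 := fun h => (h1 h).1
       replace h2 := fun h => (h2 h).1
       omega)

end SignedPaper
end

section
/- Let g be a positive integer and let (B,π) be a g-wide signed graph. If (B,π) is SP-complete, then EDC(B,π) is SP-complete. -/
open SimpleGraph

namespace SignedPaper

variable {V : Type*} {W : Type*}

/-! ### Contractions and `K₄`-minors -/

/-- The graph obtained by identifying vertices along `c` (loops are dropped). -/
def contr {V : Type*} {V' : Type*} (H : SimpleGraph V) (c : V → V') : SimpleGraph V' where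
  Adj p q := p ≠ q ∧ ∃ u v, H.Adj u v ∧ c u = p ∧ c v = q
  symm.symm := fun _ _ h => by
    obtain ⟨h1, u, v, h2, h3, h4⟩ := h
    exact ⟨h1.symm, v, u, h2.symm, h4, h3⟩
  loopless.irrefl := fun _ h => h.1 rfl

lemma rtg_symm {α : Type*} {R : α → α → Prop} (hR : ∀ a b, R a b → R b a) {a b : α}
    (h : Relation.ReflTransGen R a b) : Relation.ReflTransGen R b a := by
  induction h with
  | refl => exact Relation.ReflTransGen.refl
  | tail _ hbc ih => exact Relation.ReflTransGen.head (hR _ _ hbc) ih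

/-- Fibers of `c` are connected in `H`. -/
def FibConn {V : Type*} {V' : Type*} (H : SimpleGraph V) (c : V → V') : Prop :=
  ∀ u v, c u = c v → Relation.ReflTransGen (fun a b => H.Adj a b ∧ c a = c b) u v

lemma minor_lift {V : Type*} {V' : Type*} {H : SimpleGraph V} {H' : SimpleGraph V'} {c : V → V'}
    (hfib : FibConn H c)
    (hlift : ∀ p q, H'.Adj p q → ∃ u v, H.Adj u v ∧ c u = p ∧ c v = q)
    (hm : HasK4Minor H') : HasK4Minor H := by
  obtain ⟨S, hconn, hdisj, hadj⟩ := hm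
  have fib : ∀ (T : Set V') (u v : V) (hu : c u ∈ T) (hv : c v ∈ T), c u = c v →
      (H.induce (c ⁻¹' T)).Reachable ⟨u, hu⟩ ⟨v, hv⟩ := by
    intro T u v hu hv huv
    have h := hfib u v huv
    clear huv
    induction h with
    | refl => exact SimpleGraph.Reachable.refl _
    | @tail b d _ hbd ih =>
      have hb : c b ∈ T := by rw [hbd.2]; exact hv
      refine (ih hb).trans (SimpleGraph.Adj.reachable ?_)
      exact hbd.1
  have key : ∀ (T : Set V') (p q : T), (H'.induce T).Reachable p q →
      ∀ (u v : V) (hu : c u ∈ T) (hv : c v ∈ T), c u = p.1 → c v = q.1 →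
      (H.induce (c ⁻¹' T)).Reachable ⟨u, hu⟩ ⟨v, hv⟩ := by
    intro T p q hpq
    obtain ⟨w⟩ := hpq
    induction w with
    | nil => intro u v hu hv h1 h2; exact fib T u v hu hv (h1.trans h2.symm)
    | @cons p r q hpr _ ih =>
      intro u v hu hv h1 h2
      obtain ⟨u', r', ha, hu', hr'⟩ := hlift _ _ hpr
      have hu'T : c u' ∈ T := by rw [hu']; exact p.2
      have hr'T : c r' ∈ T := by rw [hr']; exact r.2
      refine (fib T u u' hu hu'T (h1.trans hu'.symm)).trans ?_
      refine SimpleGraph.Reachable.trans (SimpleGraph.Adj.reachable ?_) (ih r' v hr'T hv hr' h2)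
      exact ha
  refine ⟨fun i => c ⁻¹' S i, ?_, ?_, ?_⟩
  · intro i
    obtain ⟨j, hj⟩ : ∃ j : Fin 4, i ≠ j := by
      by_cases h : i = 0
      · exact ⟨1, by subst h; decide⟩
      · exact ⟨0, h⟩
    obtain ⟨p, hp, q, hq, hpq⟩ := hadj i j hj
    obtain ⟨u, v, _, hu, _⟩ := hlift _ _ hpq
    have huS : c u ∈ S i := by rw [hu]; exact hp
    have : Nonempty ↑(c ⁻¹' S i) := ⟨⟨u, huS⟩⟩
    refine SimpleGraph.Connected.mk ?_
    rintro ⟨x, hx⟩ ⟨y, hy⟩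
    exact key (S i) ⟨c x, hx⟩ ⟨c y, hy⟩ ((hconn i).preconnected _ _) x y hx hy rfl rfl
  · intro i j hij
    exact Disjoint.preimage c (hdisj i j hij)
  · intro i j hij
    obtain ⟨p, hp, q, hq, hpq⟩ := hadj i j hij
    obtain ⟨u, v, huv, hu, hv⟩ := hlift _ _ hpq
    exact ⟨u, by rw [← hu] at hp; exact hp, v, by rw [← hv] at hq; exact hq, huv⟩

lemma contr_noK4 {V : Type*} {H : SimpleGraph V} {c : V → V}
    (hfib : FibConn H c) (h : ¬ HasK4Minor H) : ¬ HasK4Minor (contr H c) :=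
  fun hm => h (minor_lift (H' := contr H c) hfib (fun _ _ hpq => hpq.2) hm)

/-- A convenient way to produce a `K₄`-minor with explicit branch sets. -/
lemma mkK4 {V : Type*} {H : SimpleGraph V} {r z z' p v : V}
    (h1 : H.Adj r z) (h2 : H.Adj r z') (h3 : H.Adj z z') (h4 : H.Adj z p) (h5 : H.Adj z' p)
    (hpv : p = v ∨ H.Adj p v) (hrv : H.Adj r v) (hpr : p ≠ r) (hvz : v ≠ z) (hvz' : v ≠ z') :
    HasK4Minor H := by
  have sing : ∀ x : V, (H.induce ({x} : Set V)).Connected := by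
    intro x
    have : Nonempty ↑({x} : Set V) := ⟨⟨x, rfl⟩⟩
    refine SimpleGraph.Connected.mk ?_
    rintro ⟨a, ha⟩ ⟨b, hb⟩
    have : (⟨a, ha⟩ : ({x} : Set V)) = ⟨b, hb⟩ := Subtype.ext (ha.trans hb.symm)
    rw [this]
  have pair : (H.induce ({p, v} : Set V)).Connected := by
    have : Nonempty ↑({p, v} : Set V) := ⟨⟨p, by simp⟩⟩
    refine SimpleGraph.Connected.mk ?_
    have hp : p ∈ ({p, v} : Set V) := by simp
    have hv : v ∈ ({p, v} : Set V) := by simp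
    have hpvr : (H.induce ({p, v} : Set V)).Reachable ⟨p, hp⟩ ⟨v, hv⟩ := by
      rcases hpv with h | h
      · have : (⟨p, hp⟩ : ({p, v} : Set V)) = ⟨v, hv⟩ := Subtype.ext h
        rw [this]
      · exact SimpleGraph.Adj.reachable h
    have : ∀ a : ({p, v} : Set V), (H.induce ({p, v} : Set V)).Reachable ⟨p, hp⟩ a := by
      rintro ⟨a, ha⟩
      rcases ha with rfl | ha
      · exact SimpleGraph.Reachable.refl _
      · have ha' : a = v := ha
        subst ha'
        exact hpvr
    intro a b
    exact (this a).symm.trans (this b)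
  have n1 := h1.ne
  have n2 := h2.ne
  have n3 := h3.ne
  have n4 := h4.ne
  have n5 := h5.ne
  have n6 := hrv.ne
  refine ⟨![{r}, {z}, {z'}, {p, v}], ?_, ?_, ?_⟩
  · intro i
    fin_cases i
    · exact sing r
    · exact sing z
    · exact sing z'
    · exact pair
  · intro i j hij
    fin_cases i <;> fin_cases j <;> first
      | exact absurd rfl hij
      | (simp [Set.disjoint_left]; grind)
  · intro i j hij
    have h1' := h1.symm
    have h2' := h2.symm
    have h3' := h3.symm
    have h4' := h4.symm
    have h5' := h5.symm
    have hrv' := hrv.symm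
    fin_cases i <;> fin_cases j <;> first
      | exact absurd rfl hij
      | (simp; grind)

lemma supp_lt {V : Type*} [Finite V] {H : SimpleGraph V} {c : V → V} {x y : V}
    (hc : ∀ u, c u = u ∨ ∃ t, H.Adj (c u) t) (hxy : H.Adj x y) (hx : ∀ u, c u ≠ x) :
    {v | ∃ t, (contr H c).Adj v t}.ncard < {v | ∃ t, H.Adj v t}.ncard := by
  apply Set.ncard_lt_ncard _ (Set.toFinite _)
  refine ⟨?_, ?_⟩
  · rintro p ⟨q, _, u, v, huv, rfl, _⟩
    rcases hc u with h | h
    · rw [h]; exact ⟨v, huv⟩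
    · exact h
  · intro h
    obtain ⟨q, _, u, v, huv, hu, _⟩ := h (show x ∈ {v | ∃ t, H.Adj v t} from ⟨y, hxy⟩)
    exact hx u hu

/-- `v` is isolated or has degree at least three. -/
def D3 {V : Type*} (H : SimpleGraph V) (v : V) : Prop :=
  (∀ u, ¬ H.Adj v u) ∨ ∀ a b, ∃ y, H.Adj v y ∧ y ≠ a ∧ y ≠ b

open Classical in
lemma fib_one {V : Type*} {H : SimpleGraph V} {x a : V} (h : H.Adj x a) :
    FibConn H (fun v => if v = x then a else v) := by
  intro u v huv
  by_cases hu : u = x <;> by_cases hv : v = x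
  · subst hu; subst hv; exact Relation.ReflTransGen.refl
  · refine Relation.ReflTransGen.single ⟨?_, huv⟩
    simp only [hu, hv, if_true, if_false] at huv
    subst huv; subst hu; exact h
  · refine Relation.ReflTransGen.single ⟨?_, huv⟩
    simp only [hu, hv, if_true, if_false] at huv
    subst huv; subst hv; exact h.symm
  · simp only [hu, hv, if_false] at huv
    subst huv; exact Relation.ReflTransGen.refl

open Classical in
/-- Rooted version of Dirac's theorem. -/
lemma dirac_root {V : Type*} [Finite V] : ∀ (n : ℕ) (H : SimpleGraph V) (r : V),
    {v | ∃ t, H.Adj v t}.ncard = n → (∃ t, H.Adj r t) → (∀ v, v ≠ r → D3 H v) →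
    HasK4Minor H := by
  intro n
  induction n using Nat.strong_induction_on with
  | _ n IH =>
  intro H r hn hr hD
  by_contra hK
  -- a version of the induction hypothesis with any root
  have IH' : ∀ c : V → V, FibConn H c → (∀ u, c u = u ∨ ∃ t, H.Adj (c u) t) →
      (∃ x y, H.Adj x y ∧ ∀ u, c u ≠ x) → (∃ t, (contr H c).Adj r t) →
      ∃ v, v ≠ r ∧ ¬ D3 (contr H c) v := by
    intro c hf hc hx ht
    obtain ⟨x, y, hxy, hx⟩ := hx
    by_contra hcon
    push Not at hcon
    exact contr_noK4 hf hK (IH _ (hn ▸ supp_lt hc hxy hx) (contr H c) r rfl ht hcon)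
  have L1 : ∀ y, H.Adj r y → ∃ z b, z ≠ r ∧ H.Adj z r ∧ H.Adj z y ∧ H.Adj z b ∧ b ≠ r ∧ b ≠ y ∧
      ∀ t, H.Adj z t → t = r ∨ t = y ∨ t = b := by
    intro y hy
    have hyD : ∀ a b, ∃ t, H.Adj y t ∧ t ≠ a ∧ t ≠ b := by
      rcases hD y hy.ne' with h | h
      · exact absurd hy.symm (h r)
      · exact h
    obtain ⟨z, hzr, hz⟩ := IH' (fun v => if v = y then r else v) (fib_one hy.symm)
      (by
        intro u
        by_cases hu : u = y
        · right; simp only [hu, if_true]; exact hr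
        · left; simp [hu])
      ⟨y, r, hy.symm, by
        intro u
        by_cases hu : u = y
        · simp only [hu, if_true]; exact hy.ne
        · simp [hu]⟩
      (by
        obtain ⟨t, ht, htr, _⟩ := hyD r r
        exact ⟨t, htr.symm, y, t, ht, by simp, by simp [ht.ne']⟩)
    unfold D3 at hz
    push Not at hz
    obtain ⟨⟨u, hu⟩, a, b, hab⟩ := hz
    have hzy : z ≠ y := by
      rintro rfl
      obtain ⟨_, s, t, _, hs, _⟩ := hu
      by_cases h : s = z
      · simp only [h, if_true] at hs; exact hy.ne hs
      · simp only [h, if_false] at hs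
    have hzD : ∀ a b, ∃ t, H.Adj z t ∧ t ≠ a ∧ t ≠ b := by
      rcases hD z hzr with h | h
      · exfalso
        obtain ⟨_, s, t, hst, hs, _⟩ := hu
        by_cases h' : s = y
        · simp only [h', if_true] at hs; exact hzr hs.symm
        · simp only [h', if_false] at hs; subst hs; exact h _ hst
      · exact h
    have hA : ∀ t, H.Adj z t → t ≠ y → t = a ∨ t = b := by
      intro t ht hty
      by_contra hcon
      push Not at hcon
      exact hcon.2 (hab t ⟨ht.ne, z, t, ht, by simp [hzy], by simp [hty]⟩ hcon.1)
    have hzy' : H.Adj z y := by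
      obtain ⟨t, ht, hta, htb⟩ := hzD a b
      by_cases hty : t = y
      · rwa [← hty]
      · rcases hA t ht hty with h | h
        · exact absurd h hta
        · exact absurd h htb
    have hB : r = a ∨ r = b := by
      by_contra hcon
      push Not at hcon
      exact hcon.2 (hab r ⟨hzr, z, y, hzy', by simp [hzy], by simp⟩ hcon.1)
    have fin : ∀ b', (∀ t, H.Adj z t → t ≠ y → t = r ∨ t = b') → 
        ∃ z b, z ≠ r ∧ H.Adj z r ∧ H.Adj z y ∧ H.Adj z b ∧ b ≠ r ∧ b ≠ y ∧
        ∀ t, H.Adj z t → t = r ∨ t = y ∨ t = b := by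
      intro b' hb'
      obtain ⟨t1, ht1, h11, h12⟩ := hzD y b'
      have e1 : t1 = r := (hb' t1 ht1 h11).resolve_right h12
      obtain ⟨t2, ht2, h21, h22⟩ := hzD y r
      have e2 : t2 = b' := (hb' t2 ht2 h21).resolve_left h22
      subst e1; subst e2
      refine ⟨z, t2, hzr, ht1, hzy', ht2, h22, h21, ?_⟩
      intro t ht
      by_cases h : t = y
      · exact Or.inr (Or.inl h)
      · rcases hb' t ht h with h | h
        · exact Or.inl h
        · exact Or.inr (Or.inr h)
    rcases hB with h | h
    · exact fin b (by rw [h]; exact hA)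
    · exact fin a (by rw [h]; intro t h1 h2; exact (hA t h1 h2).symm)
  obtain ⟨y0, hy0⟩ := hr
  obtain ⟨z, b0, hzr, hzr', hzy0, hzb0, hb0r, hb0y, hNz⟩ := L1 y0 hy0
  obtain ⟨z', p', hz'r, hz'r', hz'z, hz'p', hp'r, hp'z, hNz'⟩ := L1 z hzr'.symm
  obtain ⟨p, hzp, hpr, hpz', hNz2⟩ : ∃ p, H.Adj z p ∧ p ≠ r ∧ p ≠ z' ∧
      ∀ t, H.Adj z t → t = r ∨ t = z' ∨ t = p := by
    rcases hNz z' hz'z.symm with h | h | h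
    · exact absurd h hz'r
    · exact ⟨b0, hzb0, hb0r, by rw [h]; exact hb0y, by rw [h]; exact hNz⟩
    · refine ⟨y0, hzy0, hy0.ne', by rw [h]; exact hb0y.symm, ?_⟩
      intro t ht
      rcases hNz t ht with h1 | h1 | h1
      · exact Or.inl h1
      · exact Or.inr (Or.inr h1)
      · exact Or.inr (Or.inl (h1.trans h.symm))
  have hzz' : z ≠ z' := hz'z.ne'
  have hrt : ∃ t, H.Adj r t := ⟨z, hzr'.symm⟩
  by_cases hpp : p = p'
  · subst hpp
    have hno : ∀ v, H.Adj r v → (p = v ∨ H.Adj p v) → v ≠ z → v ≠ z' → False := by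
      intro v h1 h2 h3 h4
      exact hK (mkK4 hzr'.symm hz'r'.symm hz'z.symm hzp hz'p' h2 h1 hpr h3 h4)
    have hrp : ¬ H.Adj r p := fun h => hno p h (Or.inl rfl) hzp.ne' hpz'
    have hpD : ∀ a b, ∃ t, H.Adj p t ∧ t ≠ a ∧ t ≠ b := by
      rcases hD p hpr with h | h
      · exact absurd hzp.symm (h z)
      · exact h
    obtain ⟨q, hpq, hqz, hqz'⟩ := hpD z z'
    set c : V → V := fun v => if v = z ∨ v = z' ∨ v = p then r else v with hc
    have cid : ∀ v, v ≠ z → v ≠ z' → v ≠ p → c v = v := by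
      intro v h1 h2 h3; simp [hc, h1, h2, h3]
    have cz : c z = r := by simp [hc]
    have cz' : c z' = r := by simp [hc]
    have cp : c p = r := by simp [hc]
    have cr : c r = r := by simp [hc]
    have cne : ∀ x, (x = z ∨ x = z' ∨ x = p) → ∀ u, c u ≠ x := by
      intro x hx u
      have hxr : x ≠ r := by
        rcases hx with rfl | rfl | rfl
        · exact hzr
        · exact hz'r
        · exact hpr
      by_cases hu : u = z ∨ u = z' ∨ u = p
      · simp only [hc, hu, if_true]; exact hxr.symm
      · simp only [hc, hu, if_false]
        rintro rfl
        exact hu hx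
    have hr_to : ∀ u, c u = r → Relation.ReflTransGen (fun a b => H.Adj a b ∧ c a = c b) u r := by
      intro u hu
      by_cases h1 : u = z
      · subst h1; exact Relation.ReflTransGen.single ⟨hzr', by rw [cz, cr]⟩
      by_cases h2 : u = z'
      · subst h2; exact Relation.ReflTransGen.single ⟨hz'r', by rw [cz', cr]⟩
      by_cases h3 : u = p
      · subst h3
        exact (Relation.ReflTransGen.single ⟨hzp.symm, by rw [cp, cz]⟩).tail
          ⟨hzr', by rw [cz, cr]⟩
      rw [cid u h1 h2 h3] at hu
      rw [hu]
    have hfib : FibConn H c := by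
      intro u v huv
      by_cases hu : c u = r
      · have h1 := hr_to u hu
        have h2 := hr_to v (huv ▸ hu)
        refine h1.trans ?_
        exact rtg_symm (fun a b h => ⟨h.1.symm, h.2.symm⟩) h2
      · have e : ∀ u, c u ≠ r → c u = u := by
          intro u hu
          by_cases h : u = z ∨ u = z' ∨ u = p
          · exact absurd (by simp [hc, h]) hu
          · simp [hc, h]
        have e2 := e v (fun h => hu (huv.trans h))
        have e1 := e u hu
        have e3 : u = v := e1.symm.trans (huv.trans e2)
        rw [e3]
    have hqp : q ≠ p := hpq.ne'
    have hqr : q ≠ r := by rintro rfl; exact hrp hpq.symm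
    obtain ⟨v, hvr, hv⟩ := IH' c hfib
      (by
        intro u
        by_cases hu : u = z ∨ u = z' ∨ u = p
        · right; simp only [hc, hu, if_true]; exact hrt
        · left; simp only [hc, hu, if_false])
      ⟨z, r, hzr', cne z (Or.inl rfl)⟩
      ⟨q, hqr.symm, p, q, hpq, cp, cid q hqz hqz' hqp⟩
    apply hv
    by_cases hv1 : v = z ∨ v = z' ∨ v = p
    · left
      rintro u ⟨_, s, t, _, hs, _⟩
      exact cne v hv1 s hs
    · push Not at hv1
      obtain ⟨hvz, hvz', hvp⟩ := hv1
      have hvz2 : ¬ H.Adj v z := by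
        intro h
        rcases hNz2 v h.symm with h | h | h
        · exact hvr h
        · exact hvz' h
        · exact hvp h
      have hvz'2 : ¬ H.Adj v z' := by
        intro h
        rcases hNz' v h.symm with h | h | h
        · exact hvr h
        · exact hvz h
        · exact hvp h
      rcases hD v hvr with h | h
      · left
        rintro u ⟨_, s, t, hst, hs, _⟩
        by_cases hs1 : s = z ∨ s = z' ∨ s = p
        · simp only [hc, hs1, if_true] at hs; exact hvr hs.symm
        · simp only [hc, hs1, if_false] at hs; subst hs; exact h _ hst
      · right
        intro a b
        have stay : ∀ y, H.Adj v y → y ≠ p → (contr H c).Adj v y := by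
          intro y hy hyp
          refine ⟨hy.ne, v, y, hy, cid v hvz hvz' hvp, cid y ?_ ?_ hyp⟩
          · rintro rfl; exact hvz2 hy
          · rintro rfl; exact hvz'2 hy
        by_cases hvp2 : H.Adj v p
        · have hvr2 : ¬ H.Adj r v := fun h => hno v h (Or.inr hvp2.symm) hvz hvz'
          have hadj : (contr H c).Adj v r := ⟨hvr, v, p, hvp2, cid v hvz hvz' hvp, cp⟩
          by_cases hra : r = a
          · obtain ⟨y, hy, hyp, hyb⟩ := h p b
            exact ⟨y, stay y hy hyp, by rintro rfl; subst hra; exact hvr2 hy.symm, hyb⟩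
          · by_cases hrb : r = b
            · obtain ⟨y, hy, hyp, hya⟩ := h p a
              exact ⟨y, stay y hy hyp, hya, by rintro rfl; subst hrb; exact hvr2 hy.symm⟩
            · exact ⟨r, hadj, hra, hrb⟩
        · obtain ⟨y, hy, hya, hyb⟩ := h a b
          exact ⟨y, stay y hy (by rintro rfl; exact hvp2 hy), hya, hyb⟩
  · -- contract `z'` into `z`
    have hp'z' : p' ≠ z' := hz'p'.ne'
    have hp'zn : ¬ H.Adj p' z := by
      intro h
      rcases hNz2 p' h.symm with h | h | h
      · exact hp'r h
      · exact hp'z' h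
      · exact hpp h.symm
    set c : V → V := fun v => if v = z' then z else v with hc
    have cid : ∀ v, v ≠ z' → c v = v := by intro v h; simp [hc, h]
    have cz' : c z' = z := by simp [hc]
    obtain ⟨v, hvr, hv⟩ := IH' c (fib_one hz'z)
      (by
        intro u
        by_cases hu : u = z'
        · right; rw [hu, cz']; exact ⟨r, hzr'⟩
        · left; exact cid u hu)
      ⟨z', z, hz'z, by
        intro u
        by_cases hu : u = z'
        · rw [hu, cz']; exact hzz'
        · rw [cid u hu]; exact hu⟩
      ⟨z, hzr.symm, r, z, hzr'.symm, cid r hz'r.symm, cid z hzz'⟩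
    apply hv
    by_cases hvz' : v = z'
    · left
      rintro u ⟨_, s, t, _, hs, _⟩
      by_cases h : s = z'
      · rw [h, cz', hvz'] at hs; exact hzz' hs
      · rw [cid s h, hvz'] at hs; exact h hs
    by_cases hvz : v = z
    · right
      intro a b
      have a1 : (contr H c).Adj z r := ⟨hzr, z, r, hzr', cid z hzz', cid r hz'r.symm⟩
      have a2 : (contr H c).Adj z p := ⟨hzp.ne, z, p, hzp, cid z hzz', cid p hpz'⟩
      have a3 : (contr H c).Adj z p' := ⟨hp'z.symm, z', p', hz'p', cz', cid p' hp'z'⟩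
      rw [hvz]
      grind
    rcases hD v hvr with h | h
    · left
      rintro u ⟨_, s, t, hst, hs, _⟩
      by_cases hs1 : s = z'
      · rw [hs1, cz'] at hs; exact hvz hs.symm
      · rw [cid s hs1] at hs; subst hs; exact h _ hst
    · right
      intro a b
      have stay : ∀ y, H.Adj v y → y ≠ z' → (contr H c).Adj v y := by
        intro y hy hyp
        exact ⟨hy.ne, v, y, hy, cid v hvz', cid y hyp⟩
      by_cases hvz2 : H.Adj v z'
      · have hvp' : v = p' := by
          rcases hNz' v hvz2.symm with h | h | h
          · exact absurd h hvr
          · exact absurd h hvz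
          · exact h
        have hnz : ¬ H.Adj v z := by rw [hvp']; exact hp'zn
        have hadj : (contr H c).Adj v z := ⟨hvz, v, z', hvz2, cid v hvz', cz'⟩
        by_cases hra : z = a
        · obtain ⟨y, hy, hyp, hyb⟩ := h z' b
          exact ⟨y, stay y hy hyp, by rintro rfl; subst hra; exact hnz hy, hyb⟩
        · by_cases hrb : z = b
          · obtain ⟨y, hy, hyp, hya⟩ := h z' a
            exact ⟨y, stay y hy hyp, hya, by rintro rfl; subst hrb; exact hnz hy⟩
          · exact ⟨z, hadj, hra, hrb⟩
      · obtain ⟨y, hy, hya, hyb⟩ := h a b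
        exact ⟨y, stay y hy (by rintro rfl; exact hvz2 hy), hya, hyb⟩

/-- A `K₄`-minor-free graph with an edge has a vertex of degree one or two. -/
lemma exists_low {V : Type*} [Finite V] (H : SimpleGraph V) (hK : ¬ HasK4Minor H)
    (hne : ∃ r t, H.Adj r t) :
    ∃ x a b, H.Adj x a ∧ H.Adj x b ∧ ∀ y, H.Adj x y → y = a ∨ y = b := by
  obtain ⟨r, t, hrt⟩ := hne
  by_contra hcon
  push Not at hcon
  apply hK
  refine dirac_root _ H r rfl ⟨t, hrt⟩ ?_
  intro v _
  by_cases hv : ∀ u, ¬ H.Adj v u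
  · exact Or.inl hv
  · right
    push Not at hv
    obtain ⟨u, hu⟩ := hv
    intro a b
    by_contra hc
    push Not at hc
    by_cases ha : H.Adj v a
    · by_cases hb : H.Adj v b
      · obtain ⟨y, h1, h2, h3⟩ := hcon v a b ha hb
        exact h3 (hc y h1 h2)
      · obtain ⟨y, h1, h2, h3⟩ := hcon v a a ha ha
        have := hc y h1 h2
        subst this
        exact hb h1
    · by_cases hb : H.Adj v b
      · obtain ⟨y, h1, h2, h3⟩ := hcon v b b hb hb
        have : y ≠ a := by rintro rfl; exact ha h1
        exact h2 (hc y h1 this)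
      · have : u ≠ a := by rintro rfl; exact ha hu
        have := hc u hu this
        subst this
        exact hb hu

/-! ### Embedding into the cube -/

lemma cube_ext {k : ℕ} (A B : Finset (Fin k)) (p q : ℕ)
    (h1 : p ≤ q + (symmDiff A B).card) (h2 : q ≤ p + (symmDiff A B).card)
    (h3 : (symmDiff A B).card ≤ p + q) (h4 : p + q + (symmDiff A B).card ≤ 2 * k)
    (h5 : (p + q + (symmDiff A B).card) % 2 = 0) :
    ∃ Y : Finset (Fin k), (symmDiff Y A).card = p ∧ (symmDiff Y B).card = q := by
  set D := symmDiff A B with hD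
  obtain ⟨I, hI, hIc⟩ := Finset.exists_subset_card_eq (s := D) (n := (p + D.card - q) / 2)
    (by omega)
  have hcompl : Dᶜ.card = k - D.card := by rw [Finset.card_compl, Fintype.card_fin]
  have hDk : D.card ≤ k := by simpa using Finset.card_le_univ D
  obtain ⟨J, hJ, hJc⟩ := Finset.exists_subset_card_eq (s := Dᶜ) (n := (p + q - D.card) / 2)
    (by omega)
  have hIJ : Disjoint I J := by
    rw [Finset.disjoint_left]
    intro x hx hx'
    exact (Finset.mem_compl.1 (hJ hx')) (hI hx)
  have hTD : symmDiff (I ∪ J) D = (D \ I) ∪ J := by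
    ext x
    have a1 := @hI x
    have a2 := @hJ x
    simp only [Finset.mem_symmDiff, Finset.mem_union, Finset.mem_sdiff, Finset.mem_compl] at *
    tauto
  have hdisj2 : Disjoint (D \ I) J := by
    rw [Finset.disjoint_left]
    intro x hx hx'
    exact (Finset.mem_compl.1 (hJ hx')) (Finset.mem_sdiff.1 hx).1
  refine ⟨symmDiff (I ∪ J) A, ?_, ?_⟩
  · rw [symmDiff_assoc, symmDiff_self, symmDiff_bot, Finset.card_union_of_disjoint hIJ]
    omega
  · rw [symmDiff_assoc, ← hD, hTD, Finset.card_union_of_disjoint hdisj2,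
      Finset.card_sdiff_of_subset hI]
    omega

/-- The arithmetic of one extension step. -/
lemma arith_step (k w P1 N1 P2 N2 P0 N0 : ℤ) (hk1 : 1 ≤ k) (hw0 : 0 ≤ w) (hwk : w ≤ k)
    (hP1 : 0 ≤ P1) (hN1 : 0 ≤ N1) (hP2 : 0 ≤ P2) (hN2 : 0 ≤ N2)
    (hw1 : k - N0 ≤ w) (hw2 : w ≤ P0) (hwp : (w + P0) % 2 = 0)
    (t1 : P0 ≤ P1 + P2) (t2 : P0 ≤ N1 + N2)
    (t3 : N0 ≤ P1 + N2) (t4 : N0 ≤ N1 + P2)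
    (k1 : k ≤ P1 + N1) (k2 : k ≤ P2 + N2)
    (e1 : (P1 + N1 + k) % 2 = 0) (e2 : (P2 + N2 + k) % 2 = 0)
    (e : (P0 + P1 + P2) % 2 = 0) :
    ∃ p q : ℤ, 0 ≤ p ∧ 0 ≤ q ∧ k - N1 ≤ p ∧ p ≤ P1 ∧ (p + P1) % 2 = 0 ∧
      k - N2 ≤ q ∧ q ≤ P2 ∧ (q + P2) % 2 = 0 ∧
      p ≤ q + w ∧ q ≤ p + w ∧ w ≤ p + q ∧ p + q + w ≤ 2 * k ∧ (p + q + w) % 2 = 0 := by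
  obtain ⟨p, hp0, hpa, hpb, hpc, hp1, hp2, hp3, hpk, hpp⟩ : ∃ p : ℤ, 0 ≤ p ∧ k - N1 ≤ p ∧
      w - P2 ≤ p ∧ (k - N2) - w ≤ p ∧ p ≤ P1 ∧ p ≤ w + P2 ∧ p ≤ 2 * k - w - (k - N2) ∧ p ≤ k ∧
      (p + P1) % 2 = 0 := by
    obtain ⟨m, m1, m2, m3, m4⟩ : ∃ m, k - N1 ≤ m ∧ w - P2 ≤ m ∧ (k - N2) - w ≤ m ∧
        (m = k - N1 ∨ m = w - P2 ∨ m = (k - N2) - w) :=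
      ⟨max (k - N1) (max (w - P2) ((k - N2) - w)), by omega, by omega, by omega, by omega⟩
    by_cases hm : m < 0
    · refine ⟨P1 % 2, ?_⟩
      omega
    · refine ⟨m, ?_⟩
      omega
  refine ⟨p, max (max (w - p) (p - w)) (k - N2), ?_⟩
  omega

/-- A pair of (positive, negative) distance functions. -/
structure DistSys (V : Type*) (k : ℕ) (P N : V → V → ℤ) : Prop where
  k1 : 1 ≤ k
  P0 : ∀ u v, 0 ≤ P u v
  N0 : ∀ u v, 0 ≤ N u v
  Pself : ∀ u, P u u = 0
  Psymm : ∀ u v, P u v = P v u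
  Nsymm : ∀ u v, N u v = N v u
  t1 : ∀ u v x, P u v ≤ P u x + P x v
  t2 : ∀ u v x, P u v ≤ N u x + N x v
  t3 : ∀ u v x, N u v ≤ P u x + N x v
  hk : ∀ u v, (k : ℤ) ≤ P u v + N u v
  e1 : ∀ u v, (P u v + N u v + k) % 2 = 0
  e2 : ∀ u v x, (P u v + P u x + P x v) % 2 = 0

/-- The distance of two subsets is compatible with the distance system. -/
def Good {V : Type*} {k : ℕ} (P N : V → V → ℤ) (f : V → Finset (Fin k)) (u v : V) : Prop :=
  (k : ℤ) - N u v ≤ (symmDiff (f u) (f v)).card ∧ ((symmDiff (f u) (f v)).card : ℤ) ≤ P u v ∧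
    ((symmDiff (f u) (f v)).card + P u v) % 2 = 0

lemma Good.symm {V : Type*} {k : ℕ} {P N : V → V → ℤ} (hd : DistSys V k P N)
    {f : V → Finset (Fin k)} {u v : V} (h : Good P N f u v) : Good P N f v u := by
  unfold Good at *
  rw [symmDiff_comm, hd.Psymm v u, hd.Nsymm v u]
  exact h

open Classical in
lemma embed {V : Type*} [Finite V] {k : ℕ} {P N : V → V → ℤ} (hd : DistSys V k P N) :
    ∀ (n : ℕ) (H : SimpleGraph V), {v | ∃ t, H.Adj v t}.ncard = n → ¬ HasK4Minor H →
    ∃ f : V → Finset (Fin k), ∀ u v, H.Adj u v → Good P N f u v := by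
  intro n
  induction n using Nat.strong_induction_on with
  | _ n IH =>
  intro H hn hK
  by_cases hne : ∃ r t, H.Adj r t
  swap
  · push Not at hne
    exact ⟨fun _ => ∅, fun u v h => absurd h (hne u v)⟩
  obtain ⟨x, a, b, hxa, hxb, hN⟩ := exists_low H hK hne
  set c : V → V := fun v => if v = x then a else v with hc
  have cx : c x = a := by simp [hc]
  have cid : ∀ v, v ≠ x → c v = v := by intro v hv; simp [hc, hv]
  have hlt : {v | ∃ t, (contr H c).Adj v t}.ncard < n := by
    rw [← hn]
    refine supp_lt (x := x) (y := a) ?_ hxa ?_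
    · intro u
      by_cases hu : u = x
      · right; rw [hu, cx]; exact ⟨x, hxa.symm⟩
      · left; exact cid u hu
    · intro u
      by_cases hu : u = x
      · rw [hu, cx]; exact hxa.ne'
      · rw [cid u hu]; exact hu
  obtain ⟨f, hf⟩ := IH _ hlt (contr H c) rfl (contr_noK4 (fib_one hxa) hK)
  have hab : Good P N f a b := by
    by_cases h : a = b
    · subst h
      have h1 := hd.hk a a
      have h2 := hd.Pself a
      refine ⟨?_, ?_, ?_⟩
      · simp; omega
      · simp [h2]
      · simp [h2]
    · exact hf a b ⟨h, x, b, hxb, cx, cid b hxb.ne'⟩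
  obtain ⟨g1, g2, g3⟩ := hab
  have hwk : (symmDiff (f a) (f b)).card ≤ k := by
    simpa using Finset.card_le_univ (symmDiff (f a) (f b))
  obtain ⟨p, q, hp0, hq0, hp1, hp2, hp3, hq1, hq2, hq3, h1, h2, h3, h4, h5⟩ :=
    arith_step k (symmDiff (f a) (f b)).card (P a x) (N a x) (P x b) (N x b) (P a b) (N a b)
      (by exact_mod_cast hd.k1) (by positivity) (by exact_mod_cast hwk) (hd.P0 _ _) (hd.N0 _ _) (hd.P0 _ _) (hd.N0 _ _)
      g1 g2 g3 (hd.t1 _ _ _) (hd.t2 _ _ _) (hd.t3 _ _ _)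
      (by rw [hd.Nsymm a b, hd.Nsymm a x, hd.Psymm x b]; have := hd.t3 b a x; omega)
      (hd.hk _ _) (hd.hk _ _) (hd.e1 _ _) (hd.e1 _ _) (hd.e2 _ _ _)
  obtain ⟨Y, hY1, hY2⟩ := cube_ext (f a) (f b) p.toNat q.toNat (by omega) (by omega) (by omega)
    (by omega) (by omega)
  set f' : V → Finset (Fin k) := fun v => if v = x then Y else f v with hf'
  have fx : f' x = Y := by simp [hf']
  have fid : ∀ v, v ≠ x → f' v = f v := by intro v hv; simp [hf', hv]
  have hnew : ∀ y, H.Adj x y → Good P N f' x y := by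
    intro y hy
    have hyx : y ≠ x := hy.ne'
    unfold Good
    rw [fx, fid y hyx]
    rcases hN y hy with rfl | rfl
    · rw [hY1, hd.Psymm x y, hd.Nsymm x y]
      omega
    · rw [hY2]
      omega
  refine ⟨f', ?_⟩
  intro u v huv
  by_cases hu : u = x
  · subst hu; exact hnew v huv
  by_cases hv : v = x
  · subst hv; exact (hnew u huv.symm).symm hd
  have := hf u v ⟨huv.ne, u, v, huv, cid u hu, cid v hv⟩
  unfold Good at *
  rw [fid u hu, fid v hv]
  exact this

/-! ### Signs of walks -/

lemma ws_nil {V : Type*} {G : SimpleGraph V} (σ : V → V → ℤ) (a : V) :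
    walkSign σ (SimpleGraph.Walk.nil : G.Walk a a) = 1 := by simp [walkSign]

lemma ws_cons {V : Type*} {G : SimpleGraph V} (σ : V → V → ℤ) {a b c : V} (h : G.Adj a b)
    (w : G.Walk b c) : walkSign σ (SimpleGraph.Walk.cons h w) = σ a b * walkSign σ w := by
  simp [walkSign]

lemma ws_append {V : Type*} {G : SimpleGraph V} (σ : V → V → ℤ) {a b c : V} (w : G.Walk a b)
    (w' : G.Walk b c) : walkSign σ (w.append w') = walkSign σ w * walkSign σ w' := by
  simp [walkSign]

lemma ws_reverse {V : Type*} {G : SimpleGraph V} (σ : V → V → ℤ) (hσ : ∀ u v, σ u v = σ v u)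
    {a b : V} (w : G.Walk a b) : walkSign σ w.reverse = walkSign σ w := by
  induction w with
  | nil => rfl
  | cons h w ih =>
    rw [SimpleGraph.Walk.reverse_cons, ws_append, ws_cons, ws_nil, ws_cons, ih, hσ]
    ring

lemma ws_pm {V : Type*} {G : SimpleGraph V} {σ : V → V → ℤ}
    (hpm : ∀ u v, G.Adj u v → σ u v = 1 ∨ σ u v = -1) {a b : V} (w : G.Walk a b) :
    walkSign σ w = 1 ∨ walkSign σ w = -1 := by
  induction w with
  | nil => left; exact ws_nil σ _
  | cons h w ih =>
    rw [ws_cons]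
    rcases hpm _ _ h with h | h <;> rcases ih with i | i <;> simp [h, i]

/-- Signs of walks under a map that preserves edge signs up to switching. -/
lemma ws_switch {V W : Type*} {G : SimpleGraph V} {H : SimpleGraph W} {σ : V → V → ℤ}
    {π : W → W → ℤ} (f : G →g H) (x : V → ℤ) (hx : ∀ v, x v = 1 ∨ x v = -1)
    (h : ∀ u v, G.Adj u v → π (f u) (f v) = σ u v * (x u * x v)) {a b : V} (w : G.Walk a b) :
    walkSign π (w.map f) = walkSign σ w * (x a * x b) := by
  induction w with
  | @nil u =>
    rw [SimpleGraph.Walk.map_nil, ws_nil, ws_nil]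
    rcases hx u with h | h <;> simp [h]
  | @cons u v t huv w ih =>
    rw [SimpleGraph.Walk.map_cons, ws_cons, ws_cons, ih, h _ _ huv]
    rcases hx v with h | h <;> (rw [h]; ring)

/-- Comparing walk-girths gives closed walks of the same type. -/
lemma girth_walk {V W : Type*} {G : SimpleGraph V} {H : SimpleGraph W} {σ : V → V → ℤ}
    {π : W → W → ℤ} (h : ∀ neg odd : Bool, sGirth H π neg odd ≤ sGirth G σ neg odd)
    {a : V} (w : G.Walk a a) : ∃ (b : W) (w' : H.Walk b b), w'.length ≤ w.length ∧
      (walkSign π w' < 0 ↔ walkSign σ w < 0) ∧ (Odd w'.length ↔ Odd w.length) := by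
  classical
  have h1 := h (decide (walkSign σ w < 0)) (decide (Odd w.length))
  have h2 : sGirth G σ (decide (walkSign σ w < 0)) (decide (Odd w.length)) ≤ (w.length : ℕ∞) :=
    sInf_le ⟨a, w, rfl, by simp, by simp⟩
  have h3 := h1.trans h2
  unfold sGirth at h3
  set S := {n : ℕ∞ | ∃ (a : W) (w' : H.Walk a a), (w'.length : ℕ∞) = n ∧
    (walkSign π w' < 0 ↔ decide (walkSign σ w < 0) = true) ∧
    (Odd w'.length ↔ decide (Odd w.length) = true)} with hS
  have hne : S.Nonempty := by
    by_contra hcon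
    rw [Set.not_nonempty_iff_eq_empty] at hcon
    rw [hcon, sInf_empty] at h3
    simp at h3
  obtain ⟨b, w', hl, hs, ho⟩ := csInf_mem hne
  rw [← hl] at h3
  exact ⟨b, w', by exact_mod_cast h3, by simpa using hs, by simpa using ho⟩

/-- Projecting a walk of the extended double cover. -/
lemma edc_proj {W : Type*} {B : SimpleGraph W} {π : W → W → ℤ} (hsymm : ∀ u v, π u v = π v u)
    (hpm : ∀ u v, B.Adj u v → π u v = 1 ∨ π u v = -1) {x y : W × Bool}
    (w : (EDCsg B π hsymm).Walk x y) :
    ∃ (w' : B.Walk x.1 y.1) (t : ℕ), w.length = w'.length + t ∧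
      walkSign edcSign w = (-1) ^ t ∧
      walkSign π w' * (-1) ^ t = (if x.2 = y.2 then 1 else -1) := by
  induction w with
  | nil => exact ⟨SimpleGraph.Walk.nil, 0, by simp, by simp [ws_nil], by simp [ws_nil]⟩
  | @cons x y z h w ih =>
    obtain ⟨w', t, h1, h2, h3⟩ := ih
    obtain ⟨x1, x2⟩ := x
    obtain ⟨y1, y2⟩ := y
    obtain ⟨z1, z2⟩ := z
    rw [SimpleGraph.Walk.length_cons, ws_cons, h1, h2]
    have h' : (x1 = y1 ∧ x2 ≠ y2) ∨ (B.Adj x1 y1 ∧ (x2 = y2 ↔ 0 < π x1 y1)) := h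
    clear h h1 h2
    rcases h' with ⟨ha, hb⟩ | ⟨ha, hb⟩
    · subst ha
      refine ⟨w', t + 1, by ring, ?_, ?_⟩
      · simp [edcSign, pow_succ]
      · rw [pow_succ, ← mul_assoc, h3]
        cases x2 <;> cases y2 <;> cases z2 <;> simp_all
    · refine ⟨SimpleGraph.Walk.cons ha w', t, ?_, ?_, ?_⟩
      · rw [SimpleGraph.Walk.length_cons]; ring
      · simp [edcSign, ha.ne]
      · rw [ws_cons, mul_assoc, h3]
        rcases hpm _ _ ha with h | h <;> rw [h] at hb ⊢ <;>
          cases x2 <;> cases y2 <;> cases z2 <;> simp_all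

/-! ### Distance systems from wide signed graphs -/

/-- Lengths of walks with prescribed sign. -/
def lens {V : Type*} (G : SimpleGraph V) (σ : V → V → ℤ) (s : ℤ) (u v : V) : Set ℕ :=
  {n | ∃ w : G.Walk u v, w.length = n ∧ walkSign σ w = s}

lemma dist_exists {V : Type*} {G : SimpleGraph V} {σ : V → V → ℤ} {k : ℕ} (hk1 : 1 ≤ k)
    (hσ : ∀ u v, σ u v = σ v u)
    (hpm : ∀ u v, G.Adj u v → σ u v = 1 ∨ σ u v = -1) (hconn : G.Connected)
    (hpos : ∀ (a : V) (w : G.Walk a a), walkSign σ w = 1 → w.length % 2 = 0)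
    (hneg : ∀ (a : V) (w : G.Walk a a), walkSign σ w = -1 → k ≤ w.length ∧
      (w.length + k) % 2 = 0)
    (hex : ∃ (a : V) (w : G.Walk a a), walkSign σ w = -1) :
    ∃ P N : V → V → ℤ, DistSys V k P N ∧ (∀ u v, G.Adj u v → σ u v = 1 → P u v = 1) ∧
      (∀ u v, G.Adj u v → σ u v = -1 → N u v = 1) := by
  obtain ⟨a, wa, hwa⟩ := hex
  have hne : ∀ s : ℤ, (s = 1 ∨ s = -1) → ∀ u v, (lens G σ s u v).Nonempty := by
    intro s hs u v
    obtain ⟨w⟩ := hconn.preconnected u v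
    obtain ⟨w1⟩ := hconn.preconnected u a
    set w2 := ((w1.append wa).append w1.reverse).append w with hw2
    have e2 : walkSign σ w2 = - walkSign σ w := by
      rw [hw2, ws_append, ws_append, ws_append, ws_reverse σ hσ, hwa]
      rcases ws_pm hpm w1 with h | h <;> rw [h] <;> ring
    by_cases h : walkSign σ w = s
    · exact ⟨_, w, rfl, h⟩
    · refine ⟨_, w2, rfl, ?_⟩
      rcases ws_pm hpm w with h' | h' <;> rcases hs with h'' | h'' <;> omega
  set D : ℤ → V → V → ℕ := fun s u v => sInf (lens G σ s u v) with hD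
  have Dmem : ∀ s : ℤ, (s = 1 ∨ s = -1) → ∀ u v, ∃ w : G.Walk u v, w.length = D s u v ∧
      walkSign σ w = s := fun s hs u v => Nat.sInf_mem (hne s hs u v)
  have Dle : ∀ {u v} (w : G.Walk u v), D (walkSign σ w) u v ≤ w.length :=
    fun w => Nat.sInf_le ⟨w, rfl, rfl⟩
  have Dsymm : ∀ s : ℤ, (s = 1 ∨ s = -1) → ∀ u v, D s u v ≤ D s v u := by
    intro s hs u v
    obtain ⟨w, h1, h2⟩ := Dmem s hs v u
    have := Dle w.reverse
    rwa [ws_reverse σ hσ, h2, SimpleGraph.Walk.length_reverse, h1] at this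
  have Dtri : ∀ s t : ℤ, (s = 1 ∨ s = -1) → (t = 1 ∨ t = -1) → ∀ u v x,
      D (s * t) u v ≤ D s u x + D t x v := by
    intro s t hs ht u v x
    obtain ⟨w, h1, h2⟩ := Dmem s hs u x
    obtain ⟨w', h1', h2'⟩ := Dmem t ht x v
    have := Dle (w.append w')
    rwa [ws_append, h2, h2', SimpleGraph.Walk.length_append, h1, h1'] at this
  have i1 : (1 : ℤ) = 1 ∨ (1 : ℤ) = -1 := Or.inl rfl
  have i2 : (-1 : ℤ) = 1 ∨ (-1 : ℤ) = -1 := Or.inr rfl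
  have hPN : ∀ u v, k ≤ D 1 u v + D (-1) u v ∧ (D 1 u v + D (-1) u v + k) % 2 = 0 := by
    intro u v
    obtain ⟨w, h1, h2⟩ := Dmem 1 i1 u v
    obtain ⟨w', h1', h2'⟩ := Dmem (-1) i2 u v
    have := hneg u (w.append w'.reverse) (by rw [ws_append, ws_reverse σ hσ, h2, h2']; rfl)
    rwa [SimpleGraph.Walk.length_append, SimpleGraph.Walk.length_reverse, h1, h1'] at this
  have hPPP : ∀ u v x, (D 1 u v + D 1 u x + D 1 x v) % 2 = 0 := by
    intro u v x
    obtain ⟨w, h1, h2⟩ := Dmem 1 i1 u v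
    obtain ⟨w', h1', h2'⟩ := Dmem 1 i1 u x
    obtain ⟨w'', h1'', h2''⟩ := Dmem 1 i1 x v
    have := hpos u (w.append (w'.append w'').reverse) (by
      rw [ws_append, ws_reverse σ hσ, ws_append, h2, h2', h2'']; rfl)
    rw [SimpleGraph.Walk.length_append, SimpleGraph.Walk.length_reverse,
      SimpleGraph.Walk.length_append, h1, h1', h1''] at this
    omega
  have hedge : ∀ s : ℤ, (s = 1 ∨ s = -1) → ∀ u v, G.Adj u v → σ u v = s → D s u v = 1 := by
    intro s hs u v huv hsig
    have e : walkSign σ huv.toWalk = s := by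
      rw [SimpleGraph.Adj.toWalk, ws_cons, ws_nil, hsig]; ring
    have h1 := Dle huv.toWalk
    rw [e] at h1
    have h1' : D s u v ≤ 1 := by simpa using h1
    obtain ⟨w, h2, h3⟩ := Dmem s hs u v
    have := hpos u (w.append huv.toWalk.reverse) (by
      rw [ws_append, ws_reverse σ hσ, h3, e]; rcases hs with h | h <;> rw [h] <;> rfl)
    rw [SimpleGraph.Walk.length_append, SimpleGraph.Walk.length_reverse, h2] at this
    have e1 : huv.toWalk.length = 1 := by simp
    omega
  have Dself : ∀ u, D 1 u u = 0 := by
    intro u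
    have := Dle (SimpleGraph.Walk.nil : G.Walk u u)
    rw [ws_nil] at this
    simpa using this
  refine ⟨fun u v => D 1 u v, fun u v => D (-1) u v, ?_, ?_, ?_⟩
  · constructor
    · exact hk1
    · intro u v; positivity
    · intro u v; positivity
    · intro u; exact_mod_cast Dself u
    · intro u v; exact_mod_cast le_antisymm (Dsymm 1 i1 u v) (Dsymm 1 i1 v u)
    · intro u v; exact_mod_cast le_antisymm (Dsymm (-1) i2 u v) (Dsymm (-1) i2 v u)
    · intro u v x; exact_mod_cast Dtri 1 1 i1 i1 u v x
    · intro u v x; exact_mod_cast Dtri (-1) (-1) i2 i2 u v x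
    · intro u v x; exact_mod_cast Dtri 1 (-1) i1 i2 u v x
    · intro u v; exact_mod_cast (hPN u v).1
    · intro u v; exact_mod_cast (hPN u v).2
    · intro u v x; exact_mod_cast hPPP u v x
  · intro u v h1 h2
    have h3 := hedge 1 i1 u v h1 h2
    show ((D 1 u v : ℕ) : ℤ) = 1
    rw [h3]; rfl
  · intro u v h1 h2
    have h3 := hedge (-1) i2 u v h1 h2
    show ((D (-1) u v : ℕ) : ℤ) = 1
    rw [h3]; rfl

/-- Wide `K₄`-minor-free signed graphs map to signed projective cubes. -/
lemma eps_exists {V : Type*} [Finite V] {G : SimpleGraph V} {σ : V → V → ℤ} {k : ℕ} (hk1 : 1 ≤ k)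
    (hσ : ∀ u v, σ u v = σ v u)
    (hpm : ∀ u v, G.Adj u v → σ u v = 1 ∨ σ u v = -1) (hconn : G.Connected)
    (hK : ¬ HasK4Minor G)
    (hpos : ∀ (a : V) (w : G.Walk a a), walkSign σ w = 1 → w.length % 2 = 0)
    (hneg : ∀ (a : V) (w : G.Walk a a), walkSign σ w = -1 → k ≤ w.length ∧
      (w.length + k) % 2 = 0)
    (hex : ∃ (a : V) (w : G.Walk a a), walkSign σ w = -1) :
    ∃ ε : V → Fin k → ℤ, (∀ u j, ε u j = 1 ∨ ε u j = -1) ∧ ∀ u v, G.Adj u v → ∃ i, ∀ j,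
      ε u j * ε v j = σ u v * (if j = i then -1 else 1) := by
  classical
  obtain ⟨P, N, hd, hP, hN⟩ := dist_exists hk1 hσ hpm hconn hpos hneg hex
  obtain ⟨f, hf⟩ := embed hd _ G rfl hK
  refine ⟨fun u j => if j ∈ f u then -1 else 1, ?_, ?_⟩
  · intro u j
    by_cases h : j ∈ f u <;> simp [h]
  · intro u v huv
    obtain ⟨g1, g2, g3⟩ := hf u v huv
    have hsd : ∀ j, (if j ∈ f u then (-1 : ℤ) else 1) * (if j ∈ f v then -1 else 1) =
        if j ∈ symmDiff (f u) (f v) then -1 else 1 := by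
      intro j
      by_cases h1 : j ∈ f u <;> by_cases h2 : j ∈ f v <;> simp [Finset.mem_symmDiff, h1, h2]
    have hle : (symmDiff (f u) (f v)).card ≤ k := by
      simpa using Finset.card_le_univ (symmDiff (f u) (f v))
    rcases hpm u v huv with h | h
    · have h1 := hP u v huv h
      have hc : (symmDiff (f u) (f v)).card = 1 := by omega
      obtain ⟨i, hi⟩ := Finset.card_eq_one.1 hc
      refine ⟨i, fun j => ?_⟩
      rw [hsd, hi, h]
      simp
    · have h1 := hN u v huv h
      have h2 := hd.e1 u v
      have hc : (symmDiff (f u) (f v)).card = k - 1 := by omega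
      have hc' : (symmDiff (f u) (f v))ᶜ.card = 1 := by
        rw [Finset.card_compl, Fintype.card_fin]; omega
      obtain ⟨i, hi⟩ := Finset.card_eq_one.1 hc'
      refine ⟨i, fun j => ?_⟩
      have hj : j ∈ symmDiff (f u) (f v) ↔ ¬ (j = i) := by
        rw [← Finset.mem_singleton, ← hi, Finset.mem_compl, not_not]
      rw [hsd, h]
      by_cases hji : j = i
      · rw [if_neg (by rw [hj]; exact fun h => h hji), if_pos hji]; rfl
      · rw [if_pos (hj.2 hji), if_neg hji]; rfl

/-! ### The quotient construction -/

lemma sum_odd {r : ℕ} (f : Fin r → ℕ) (h : ∀ j, f j % 2 = 1) :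
    r ≤ ∑ j, f j ∧ ((∑ j, f j) + r) % 2 = 0 := by
  have e : ∑ j, f j = 2 * (∑ j, f j / 2) + r := by
    rw [Finset.mul_sum]
    have : ∑ j, f j = ∑ j, (2 * (f j / 2) + 1) :=
      Finset.sum_congr rfl (fun j _ => by have := h j; omega)
    rw [this, Finset.sum_add_distrib]
    simp
  omega

lemma sum_even {r : ℕ} (f : Fin r → ℕ) (h : ∀ j, f j % 2 = 0) :
    (∑ j, f j) % 2 = 0 := by
  have e : ∑ j, f j = 2 * (∑ j, f j / 2) := by
    rw [Finset.mul_sum]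
    exact Finset.sum_congr rfl (fun j _ => by have := h j; omega)
  omega

lemma neg_one_pow_eq_one_mod (n : ℕ) (h : (-1 : ℤ) ^ n = 1) : n % 2 = 0 := by
  rcases Nat.even_or_odd n with h1 | h1
  · exact Nat.even_iff.1 h1
  · rw [h1.neg_one_pow] at h; omega

lemma neg_one_pow_eq_neg_mod (n : ℕ) (h : (-1 : ℤ) ^ n = -1) : n % 2 = 1 := by
  rcases Nat.even_or_odd n with h1 | h1
  · rw [h1.neg_one_pow] at h; omega
  · exact Nat.odd_iff.1 h1

lemma sq_pm {x : ℤ} (h : x = 1 ∨ x = -1) : x * x = 1 := by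
  rcases h with h | h <;> rw [h] <;> rfl

/-- A signed homomorphism preserves edge signs up to switching. -/
lemma switch_exists {V W : Type*} {G : SimpleGraph V} {H : SimpleGraph W} {σ : V → V → ℤ}
    {π : W → W → ℤ} (hσ : ∀ u v, σ u v = σ v u) (hπ : ∀ u v, π u v = π v u)
    (hpm : ∀ u v, G.Adj u v → σ u v = 1 ∨ σ u v = -1)
    (hpm' : ∀ u v, H.Adj u v → π u v = 1 ∨ π u v = -1)
    (hc : G.Connected) (f : G →g H) (hf : IsSignedHom σ π f) :
    ∃ y : V → ℤ, (∀ v, y v = 1 ∨ y v = -1) ∧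
      ∀ u v, G.Adj u v → π (f u) (f v) = σ u v * (y u * y v) := by
  obtain ⟨r⟩ := hc.nonempty
  have hw : ∀ v, Nonempty (G.Walk r v) := fun v => hc.preconnected r v
  let ww : ∀ v, G.Walk r v := fun v => (hw v).some
  refine ⟨fun v => walkSign π ((ww v).map f) * walkSign σ (ww v), ?_, ?_⟩
  · intro v
    rcases ws_pm hpm (ww v) with h | h <;> rcases ws_pm hpm' ((ww v).map f) with h' | h' <;>
      simp [h, h']
  · intro u v huv
    have h1 := hf r ((ww u).append (SimpleGraph.Walk.cons huv (ww v).reverse))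
    rw [SimpleGraph.Walk.map_append, SimpleGraph.Walk.map_cons, ws_append, ws_append, ws_cons,
      ws_cons, ← SimpleGraph.Walk.reverse_map, ws_reverse π hπ, ws_reverse σ hσ] at h1
    have a1 := sq_pm (ws_pm hpm' ((ww u).map f))
    have a2 := sq_pm (ws_pm hpm' ((ww v).map f))
    set A := walkSign π ((ww u).map f)
    set C := walkSign π ((ww v).map f)
    set a := walkSign σ (ww u)
    set c := walkSign σ (ww v)
    show π (f u) (f v) = σ u v * ((A * a) * (C * c))
    calc π (f u) (f v) = (A * A) * (C * C) * π (f u) (f v) := by rw [a1, a2]; ring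
      _ = A * C * (A * (π (f u) (f v) * C)) := by ring
      _ = A * C * (a * (σ u v * c)) := by rw [h1]
      _ = _ := by ring

/-- Counting coordinates along a walk. -/
lemma q_walk {Q : Type*} {H : SimpleGraph Q} {τ : Q → Q → ℤ} {m : ℕ}
    {η : Q → Fin (m + 4) → ℤ} (hη : ∀ p j, η p j = 1 ∨ η p j = -1)
    (hedge : ∀ p q, H.Adj p q → ∃ i, i ≠ 0 ∧ τ p q = (if i = 1 then -1 else 1) ∧
      ∀ j, j ≠ 0 → j ≠ 1 → η p j * η q j = τ p q * (if j = i then -1 else 1))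
    {p q : Q} (w : H.Walk p q) : ∃ n : Fin (m + 4) → ℕ, n 0 = 0 ∧ ∑ j, n j = w.length ∧
      walkSign τ w = (-1) ^ (n 1) ∧
      ∀ j, j ≠ 0 → j ≠ 1 → η p j * η q j = (-1) ^ (n j + n 1) := by
  induction w with
  | @nil p =>
    refine ⟨fun _ => 0, rfl, by simp, by simp [ws_nil], fun j _ _ => ?_⟩
    simpa using sq_pm (hη p j)
  | @cons p q r hpq w ih =>
    obtain ⟨n, h0, hs, hw, hj⟩ := ih
    obtain ⟨i, hi0, hτ, hi⟩ := hedge p q hpq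
    refine ⟨n + Pi.single i 1, ?_, ?_, ?_, ?_⟩
    · simp [h0, Pi.single_apply, hi0.symm]
    · simp [Finset.sum_add_distrib, hs]
    · rw [ws_cons, hw, hτ]
      by_cases h : i = 1
      · subst h; simp [pow_succ]
      · simp [h, Pi.single_apply, Ne.symm h]
    · intro j j0 j1
      have e : η p j * η r j = (η p j * η q j) * (η q j * η r j) := by
        have := sq_pm (hη q j)
        calc η p j * η r j = η p j * η r j * 1 := by ring
          _ = η p j * η r j * (η q j * η q j) := by rw [this]
          _ = _ := by ring
      rw [e, hi j j0 j1, hj j j0 j1, hτ]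
      by_cases h : i = 1
      · subst h; simp [Pi.single_apply, j1, pow_add]
      · by_cases h' : j = i
        · subst h'; simp [Pi.single_apply, j1, Ne.symm j1, pow_add]
        · simp [h, h', Pi.single_apply, Ne.symm h]

lemma q_closed {Q : Type*} {H : SimpleGraph Q} {τ : Q → Q → ℤ} {m : ℕ}
    {η : Q → Fin (m + 4) → ℤ} (hη : ∀ p j, η p j = 1 ∨ η p j = -1)
    (hedge : ∀ p q, H.Adj p q → ∃ i, i ≠ 0 ∧ τ p q = (if i = 1 then -1 else 1) ∧
      ∀ j, j ≠ 0 → j ≠ 1 → η p j * η q j = τ p q * (if j = i then -1 else 1))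
    {p : Q} (w : H.Walk p p) : (walkSign τ w = 1 ∧ w.length % 2 = 0) ∨
      (walkSign τ w = -1 ∧ m + 3 ≤ w.length ∧ (w.length + (m + 3)) % 2 = 0) := by
  obtain ⟨n, h0, hs, hw, hj⟩ := q_walk hη hedge w
  have hpar : ∀ j : Fin (m + 3), n j.succ % 2 = n 1 % 2 := by
    intro j
    by_cases h : j.succ = 1
    · rw [h]
    · have h1 := hj j.succ (Fin.succ_ne_zero j) h
      rw [sq_pm (hη p _)] at h1
      have := neg_one_pow_eq_one_mod _ h1.symm
      omega
  rw [Fin.sum_univ_succ, h0, zero_add] at hs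
  rcases Nat.mod_two_eq_zero_or_one (n 1) with h | h
  · left
    refine ⟨by rw [hw]; exact (Nat.even_iff.2 h).neg_one_pow, ?_⟩
    rw [← hs]
    exact sum_even _ (fun j => by rw [hpar, h])
  · right
    refine ⟨by rw [hw]; exact (Nat.odd_iff.2 h).neg_one_pow, ?_⟩
    rw [← hs]
    exact sum_odd _ (fun j => by rw [hpar, h])

lemma q_girth {Q W : Type*} {H : SimpleGraph Q} {τ : Q → Q → ℤ} {B : SimpleGraph W}
    {π : W → W → ℤ} {r : ℕ}
    (hcl : ∀ (p : Q) (w : H.Walk p p), (walkSign τ w = 1 ∧ w.length % 2 = 0) ∨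
      (walkSign τ w = -1 ∧ r ≤ w.length ∧ (w.length + r) % 2 = 0))
    (hB : ∃ (b : W) (w : B.Walk b b), walkSign π w = -1 ∧ w.length = r) (neg odd : Bool) :
    sGirth B π neg odd ≤ sGirth H τ neg odd := by
  refine le_sInf ?_
  rintro _ ⟨a, w, rfl, h1, h2⟩
  obtain ⟨b, wb, hb1, hb2⟩ := hB
  rcases hcl a w with ⟨c1, c2⟩ | ⟨c1, c2, c3⟩
  · have : sGirth B π neg odd ≤ ((0 : ℕ) : ℕ∞) := by
      refine sInf_le ⟨b, SimpleGraph.Walk.nil, by simp, ?_, ?_⟩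
      · rw [ws_nil, ← h1, c1]
      · rw [← h2, Nat.odd_iff, Nat.odd_iff, c2]; simp
    exact this.trans (by simp)
  · have : sGirth B π neg odd ≤ (r : ℕ∞) := by
      refine sInf_le ⟨b, wb, by rw [hb2], ?_, ?_⟩
      · rw [hb1, ← h1, c1]
      · rw [← h2, Nat.odd_iff, Nat.odd_iff, hb2]; omega
    exact this.trans (by exact_mod_cast c2)

/-- Homomorphisms to the extended double cover, from a coordinatisation. -/
lemma quot_hom {V W : Type} [Finite V] {G : SimpleGraph V} {σ : V → V → ℤ} {m : ℕ}
    (hσ : ∀ u v, σ u v = σ v u)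
    (hpmG : ∀ u v, G.Adj u v → σ u v = 1 ∨ σ u v = -1) (hconn : G.Connected)
    (hK : ¬ HasK4Minor G) (ε : V → Fin (m + 4) → ℤ) (hε : ∀ u j, ε u j = 1 ∨ ε u j = -1)
    (hed : ∀ u v, G.Adj u v → ∃ i, ∀ j, ε u j * ε v j = σ u v * (if j = i then -1 else 1))
    (B : SimpleGraph W) (π : W → W → ℤ)
    (hsymm : ∀ u v, π u v = π v u) (hpm : ∀ u v, B.Adj u v → π u v = 1 ∨ π u v = -1)
    (hSP : SPComplete B π)
    (hB : ∃ (b : W) (w : B.Walk b b), walkSign π w = -1 ∧ w.length = m + 3) :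
    ∃ F : G →g EDCsg B π hsymm, IsSignedHom σ edcSign F := by
  classical
  have h10 : (1 : Fin (m + 4)) ≠ 0 := by simp [Fin.ext_iff]
  -- the edges of index zero
  let E1 : V → V → Prop := fun u v => G.Adj u v ∧ ε u 0 * ε v 0 = - σ u v
  have E1s : ∀ a b, E1 a b → E1 b a := by
    rintro a b ⟨h1, h2⟩
    exact ⟨h1.symm, by rw [mul_comm, h2, hσ]⟩
  let S : Setoid V := ⟨Relation.ReflTransGen E1, fun _ => Relation.ReflTransGen.refl,
    fun h => rtg_symm E1s h, fun h h' => h.trans h'⟩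
  let Q := Quotient S
  let c : V → Q := fun u => Quotient.mk S u
  have hc : ∀ u v, c u = c v ↔ Relation.ReflTransGen E1 u v := fun u v => Quotient.eq (r := S)
  have hcs : ∀ p : Q, ∃ u, c u = p := fun p => Quotient.exists_rep p
  haveI : Finite Q := Finite.of_surjective c hcs
  have hη1 : ∀ u v, G.Adj u v → ∃ i, (E1 u v ↔ i = 0) ∧
      (∀ j, ε u j * ε v j = σ u v * (if j = i then -1 else 1)) ∧
      (∀ j, (ε u j * ε u 1) * (ε v j * ε v 1) =
        (if i = 1 then -1 else 1) * (if j = i then -1 else 1)) := by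
    intro u v huv
    obtain ⟨i, hi⟩ := hed u v huv
    have hs := sq_pm (hpmG u v huv)
    refine ⟨i, ?_, hi, ?_⟩
    · constructor
      · rintro ⟨-, h⟩
        by_contra hne
        rw [hi 0, if_neg (Ne.symm hne)] at h
        rcases hpmG u v huv with h' | h' <;> omega
      · rintro rfl
        exact ⟨huv, by rw [hi 0, if_pos rfl]; ring⟩
    · intro j
      calc (ε u j * ε u 1) * (ε v j * ε v 1) = (ε u j * ε v j) * (ε u 1 * ε v 1) := by ring
        _ = (σ u v * σ u v) * ((if (1 : Fin (m + 4)) = i then -1 else 1) *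
            (if j = i then -1 else 1)) := by rw [hi j, hi 1]; ring
        _ = _ := by rw [hs, one_mul]; simp only [eq_comm]
  have hηpm : ∀ u j, ε u j * ε u 1 = 1 ∨ ε u j * ε u 1 = -1 := by
    intro u j
    rcases hε u j with h | h <;> rcases hε u 1 with h' | h' <;> simp [h, h']
  let ηQ : Q → Fin (m + 4) → ℤ := fun p j =>
    if j = 0 then 1 else ε (Quotient.out p) j * ε (Quotient.out p) 1
  have hηQpm : ∀ p j, ηQ p j = 1 ∨ ηQ p j = -1 := by
    intro p j
    by_cases h : j = 0
    · left; exact if_pos h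
    · have : ηQ p j = _ := if_neg h
      rw [this]; exact hηpm _ _
  have hconst : ∀ u v j, j ≠ 0 → Relation.ReflTransGen E1 u v →
      ε u j * ε u 1 = ε v j * ε v 1 := by
    intro u v j hj h
    induction h with
    | refl => rfl
    | @tail b d _ hbc ih =>
      rw [ih]
      obtain ⟨i, hi, -, hi2⟩ := hη1 _ _ hbc.1
      have hi0 := hi.1 hbc
      have h3 := hi2 j
      rw [if_neg (by rw [hi0]; exact h10.symm), if_neg (by rw [hi0]; exact hj)] at h3
      rcases hηpm b j with e | e <;> rcases hηpm d j with e' | e' <;> rw [e, e'] at h3 ⊢ <;>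
        simp at h3
  have hηQ : ∀ u j, j ≠ 0 → ηQ (c u) j = ε u j * ε u 1 := by
    intro u j hj
    have e : ηQ (c u) j = ε (Quotient.out (c u)) j * ε (Quotient.out (c u)) 1 := if_neg hj
    rw [e]
    refine hconst _ _ j hj ((hc _ _).1 ?_)
    exact Quotient.out_eq (c u)
  let τ : Q → Q → ℤ := fun p q => if ∀ j, j ≠ 0 → j ≠ 1 → ηQ p j ≠ ηQ q j then -1 else 1
  have hτs : ∀ p q, τ p q = τ q p := by
    intro p q
    simp only [τ, ne_comm (a := ηQ p _)]
  have hτpm : ∀ p q, τ p q = 1 ∨ τ p q = -1 := by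
    intro p q
    simp only [τ]
    split_ifs <;> simp
  -- the key computation of signs of quotient edges
  have hkey : ∀ u v, G.Adj u v → ¬ E1 u v → ∃ i, i ≠ 0 ∧
      (∀ j, ε u j * ε v j = σ u v * (if j = i then -1 else 1)) ∧
      τ (c u) (c v) = (if i = 1 then -1 else 1) ∧
      ∀ j, j ≠ 0 → j ≠ 1 → ηQ (c u) j * ηQ (c v) j =
        τ (c u) (c v) * (if j = i then -1 else 1) := by
    intro u v huv hE
    obtain ⟨i, hi, hie, hi2⟩ := hη1 u v huv
    have hi0 : i ≠ 0 := fun h => hE (hi.2 h)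
    have hprod : ∀ j, j ≠ 0 → ηQ (c u) j * ηQ (c v) j =
        (if i = 1 then -1 else 1) * (if j = i then -1 else 1) := by
      intro j hj
      rw [hηQ u j hj, hηQ v j hj, hi2]
    have hτ : τ (c u) (c v) = (if i = 1 then -1 else 1) := by
      by_cases h1 : i = 1
      · rw [if_pos h1]
        refine if_pos ?_
        intro j j0 j1 heq
        have h3 := hprod j j0
        rw [if_pos h1, if_neg (by rw [h1]; exact j1), heq, sq_pm (hηQpm _ _)] at h3
        norm_num at h3
      · rw [if_neg h1]
        refine if_neg ?_
        intro hall
        obtain ⟨j, j0, j1, ji⟩ : ∃ j : Fin (m + 4), j ≠ 0 ∧ j ≠ 1 ∧ j ≠ i := by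
          by_cases h2 : i = ⟨2, by omega⟩
          · refine ⟨⟨3, by omega⟩, ?_, ?_, ?_⟩
            · simp [Fin.ext_iff]
            · simp [Fin.ext_iff]
            · rw [h2]; simp
          · refine ⟨⟨2, by omega⟩, ?_, ?_, Ne.symm h2⟩
            · simp [Fin.ext_iff]
            · simp [Fin.ext_iff]
        have h3 := hprod j j0
        rw [if_neg h1, if_neg ji] at h3
        have h4 := hall j j0 j1
        rcases hηQpm (c u) j with e | e <;> rcases hηQpm (c v) j with e' | e' <;>
          rw [e, e'] at h3 h4 <;> simp at h3 h4
    exact ⟨i, hi0, hie, hτ, fun j j0 j1 => by rw [hprod j j0, hτ]⟩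
  have hneq : ∀ u v, G.Adj u v → ¬ E1 u v → c u ≠ c v := by
    intro u v huv hE heq
    obtain ⟨i, hi0, -, hτ, hj⟩ := hkey u v huv hE
    by_cases h1 : i = 1
    · have h2 : (⟨2, by omega⟩ : Fin (m + 4)) ≠ 1 := by simp [Fin.ext_iff]
      have h3 := hj ⟨2, by omega⟩ (by simp [Fin.ext_iff]) h2
      rw [hτ, if_pos h1, heq, sq_pm (hηQpm _ _), if_neg (by rw [h1]; exact h2)] at h3
      norm_num at h3
    · have h3 := hj i hi0 h1
      rw [hτ, if_neg h1, heq, sq_pm (hηQpm _ _), if_pos rfl] at h3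
      norm_num at h3
  let H : SimpleGraph Q :=
    { Adj := fun p q => ∃ u v, G.Adj u v ∧ ¬ E1 u v ∧ c u = p ∧ c v = q
      symm := ⟨by
        rintro p q ⟨u, v, h1, h2, h3, h4⟩
        exact ⟨v, u, h1.symm, fun h => h2 (E1s _ _ h), h4, h3⟩⟩
      loopless := ⟨by
        rintro p ⟨u, v, h1, h2, h3, h4⟩
        exact hneq u v h1 h2 (h3.trans h4.symm)⟩ }
  have hedge : ∀ p q, H.Adj p q → ∃ i, i ≠ 0 ∧ τ p q = (if i = 1 then -1 else 1) ∧
      ∀ j, j ≠ 0 → j ≠ 1 → ηQ p j * ηQ q j = τ p q * (if j = i then -1 else 1) := by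
    rintro p q ⟨u, v, h1, h2, rfl, rfl⟩
    obtain ⟨i, a, -, b, d⟩ := hkey u v h1 h2
    exact ⟨i, a, b, d⟩
  have hg := q_girth (fun p w => q_closed hηQpm hedge w) hB
  have hHc : H.Connected := by
    have hpre : ∀ {u v : V}, G.Walk u v → H.Reachable (c u) (c v) := by
      intro u v w
      induction w with
      | nil => exact SimpleGraph.Reachable.refl _
      | @cons a b d hab w ih =>
        by_cases h : E1 a b
        · rw [(hc a b).2 (Relation.ReflTransGen.single h)]; exact ih
        · have : H.Adj (c a) (c b) := ⟨a, b, hab, h, rfl, rfl⟩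
          exact this.reachable.trans ih
    obtain ⟨r⟩ := hconn.nonempty
    haveI : Nonempty Q := ⟨c r⟩
    refine ⟨?_⟩
    intro p q
    obtain ⟨u, rfl⟩ := hcs p
    obtain ⟨v, rfl⟩ := hcs q
    obtain ⟨w⟩ := hconn.preconnected u v
    exact hpre w
  have hHK : ¬ HasK4Minor H := by
    intro hm
    refine hK (minor_lift (c := c) ?_ ?_ hm)
    · intro u v huv
      have h := (hc u v).1 huv
      refine Relation.ReflTransGen.mono ?_ u v h
      intro a b hab
      exact ⟨hab.1, (hc a b).2 (Relation.ReflTransGen.single hab)⟩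
    · rintro p q ⟨u, v, h1, -, h3, h4⟩
      exact ⟨u, v, h1, h3, h4⟩
  obtain ⟨φ, hφ⟩ := hSP Q H τ inferInstance hτs (fun p q _ => hτpm p q) hHc hHK hg
  obtain ⟨y, hy, hyy⟩ := switch_exists hτs hsymm (fun p q _ => hτpm p q) hpm hHc φ hφ
  let s : V → ℤ := fun u => y (c u) * (ε u 0 * ε u 1)
  have hs : ∀ u, s u = 1 ∨ s u = -1 := by
    intro u
    rcases hy (c u) with a | a <;> rcases hηpm u 0 with b | b <;> simp [s, a, b]
  have hdec : ∀ u v, (decide (s u = 1) = decide (s v = 1) ↔ s u * s v = 1) := by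
    intro u v
    rcases hs u with a | a <;> rcases hs v with b | b <;> simp [a, b]
  have hE1F : ∀ u v, E1 u v → s u * s v = -1 := by
    intro u v h
    obtain ⟨i, hi, -, hi2⟩ := hη1 u v h.1
    have hi0 := hi.1 h
    have h3 := hi2 0
    rw [hi0, if_neg h10.symm, if_pos rfl] at h3
    have e : c u = c v := (hc u v).2 (Relation.ReflTransGen.single h)
    calc s u * s v = (y (c u) * y (c v)) * ((ε u 0 * ε u 1) * (ε v 0 * ε v 1)) := by
          simp only [s]; ring
      _ = -1 := by rw [h3, e, sq_pm (hy _)]; rfl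
  have hE2F : ∀ u v, G.Adj u v → ¬ E1 u v → B.Adj (φ (c u)) (φ (c v)) ∧
      s u * s v = π (φ (c u)) (φ (c v)) ∧ ε u 0 * ε v 0 = σ u v := by
    intro u v huv h
    obtain ⟨i, hi0, hie, hτ, hj⟩ := hkey u v huv h
    have hadj : H.Adj (c u) (c v) := ⟨u, v, huv, h, rfl, rfl⟩
    refine ⟨φ.map_adj hadj, ?_, by rw [hie 0, if_neg (Ne.symm hi0), mul_one]⟩
    rw [hyy _ _ hadj, hτ]
    have hs2 := sq_pm (hpmG u v huv)
    calc s u * s v = (y (c u) * y (c v)) * ((ε u 0 * ε v 0) * (ε u 1 * ε v 1)) := by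
          simp only [s]; ring
      _ = (σ u v * σ u v) * ((if (1 : Fin (m + 4)) = i then -1 else 1) *
            (y (c u) * y (c v))) := by
          rw [hie 0, hie 1, if_neg (Ne.symm hi0)]; ring
      _ = _ := by rw [hs2, one_mul]; simp only [eq_comm]
  let F : G →g EDCsg B π hsymm :=
    { toFun := fun u => (φ (c u), decide (s u = 1))
      map_rel' := by
        intro u v huv
        by_cases h : E1 u v
        · left
          refine ⟨?_, ?_⟩
          · show φ (c u) = φ (c v)
            rw [(hc u v).2 (Relation.ReflTransGen.single h)]
          · intro hd
            have h1 := (hdec u v).1 hd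
            rw [hE1F u v h] at h1
            norm_num at h1
        · right
          obtain ⟨h1, h2, -⟩ := hE2F u v huv h
          refine ⟨h1, ?_⟩
          refine (hdec u v).trans ?_
          rw [h2]
          rcases hpm _ _ h1 with h' | h' <;> rw [h'] <;> simp [h'] }
  refine ⟨F, ?_⟩
  intro a w
  rw [ws_switch (σ := σ) F (fun u => ε u 0) (fun u => hε u 0) ?_ w, sq_pm (hε a 0), mul_one]
  intro u v huv
  have hs2 := sq_pm (hpmG u v huv)
  show (if φ (c u) = φ (c v) then (-1 : ℤ) else 1) = σ u v * (ε u 0 * ε v 0)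
  by_cases h : E1 u v
  · rw [if_pos (by rw [(hc u v).2 (Relation.ReflTransGen.single h)]), h.2]
    linarith
  · obtain ⟨h1, -, h3⟩ := hE2F u v huv h
    rw [if_neg h1.ne, h3, hs2]
/-- main theorem for `K₄`-minor-free graphs: if a `g`-wide signed
graph `(B,π)` is SP-complete, then so is its Extended Double Cover. -/
theorem EDC_SPComplete {W : Type} [Fintype W]
    (B : SimpleGraph W) (π : W → W → ℤ)
    (hsymm : ∀ u v, π u v = π v u) (hpm : ∀ u v, B.Adj u v → π u v = 1 ∨ π u v = -1)
    (g : ℕ) (hg : 0 < g) (hwide : gWide B π g)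
    (hSP : SPComplete B π) :
    SPComplete (EDCsg B π hsymm) edcSign := by
  classical
  intro V' G σ hfin hσ hpmG hconn hK hgirth
  haveI := hfin
  obtain ⟨r⟩ := hconn.nonempty
  -- closed walks of `G` give closed walks of `B`
  have hcl : ∀ (a : V') (w : G.Walk a a), ∃ (b : W) (w' : B.Walk b b) (t : ℕ),
      w'.length + t ≤ w.length ∧ (w'.length + t) % 2 = w.length % 2 ∧
      ((walkSign σ w = 1 ∧ walkSign π w' = 1 ∧ t % 2 = 0) ∨
        (walkSign σ w = -1 ∧ walkSign π w' = -1 ∧ t % 2 = 1)) := by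
    intro a w
    obtain ⟨b, w1, h1, h2, h3⟩ := girth_walk hgirth w
    obtain ⟨w', t, e1, e2, e3⟩ := edc_proj hsymm hpm w1
    rw [if_pos rfl] at e3
    rw [e1] at h1 h3
    rw [Nat.odd_iff, Nat.odd_iff] at h3
    refine ⟨b.1, w', t, h1, by omega, ?_⟩
    rcases Nat.mod_two_eq_zero_or_one t with ht | ht
    · left
      rw [(Nat.even_iff.2 ht).neg_one_pow] at e2 e3
      rw [e2] at h2
      refine ⟨?_, by linarith, ht⟩
      rcases ws_pm hpmG w with h | h
      · exact h
      · rw [h] at h2; norm_num at h2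
    · right
      rw [(Nat.odd_iff.2 ht).neg_one_pow] at e2 e3
      rw [e2] at h2
      refine ⟨?_, by linarith, ht⟩
      rcases ws_pm hpmG w with h | h
      · rw [h] at h2; norm_num at h2
      · exact h
  have hpos : ∀ (a : V') (w : G.Walk a a), walkSign σ w = 1 → w.length % 2 = 0 := by
    intro a w hw
    obtain ⟨b, w', t, -, h2, ⟨-, h4, h5⟩ | ⟨h3, -, -⟩⟩ := hcl a w
    · have h6 := hwide.1 b w' (by rw [h4]; norm_num)
      rw [Nat.odd_iff] at h6
      omega
    · omega
  by_cases hex : ∃ (a : V') (w : G.Walk a a), walkSign σ w = -1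
  · -- the shortest negative closed walk of `B`
    have hexB : ∃ h : ℕ, ∃ (b : W) (w : B.Walk b b), walkSign π w = -1 ∧ w.length = h := by
      obtain ⟨a, w, hw⟩ := hex
      obtain ⟨b, w', t, -, -, ⟨h3, -, -⟩ | ⟨-, h4, -⟩⟩ := hcl a w
      · omega
      · exact ⟨_, b, w', h4, rfl⟩
    set h := Nat.find hexB with hh
    have hB : ∃ (b : W) (w : B.Walk b b), walkSign π w = -1 ∧ w.length = h := Nat.find_spec hexB
    have hmin : ∀ (b : W) (w : B.Walk b b), walkSign π w = -1 → h ≤ w.length := fun b w hw =>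
      Nat.find_min' hexB ⟨b, w, hw, rfl⟩
    have hpar : ∀ (b : W) (w : B.Walk b b), walkSign π w = -1 → w.length % 2 = h % 2 := by
      intro b w hw
      obtain ⟨b', w', hw', hl⟩ := hB
      have a1 := (hwide.2 b w (by rw [hw]; norm_num)).2
      have a2 := (hwide.2 b' w' (by rw [hw']; norm_num)).2
      rw [Nat.odd_iff, Nat.odd_iff] at a1 a2
      omega
    have h3 : 3 ≤ h := by
      obtain ⟨b', w', hw', hl⟩ := hB
      by_contra hlt
      match w' with
      | .nil => rw [ws_nil] at hw'; norm_num at hw'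
      | .cons a1 .nil => exact a1.ne rfl
      | .cons a1 (.cons a2 .nil) =>
        rw [ws_cons, ws_cons, ws_nil, hsymm _ b', mul_one, sq_pm (hpm _ _ a1)] at hw'
        norm_num at hw'
      | .cons a1 (.cons a2 (.cons a3 w3)) =>
        simp only [SimpleGraph.Walk.length_cons] at hl
        omega
    obtain ⟨m, hm⟩ : ∃ m, h = m + 3 := ⟨h - 3, by omega⟩
    clear_value h
    subst hm
    have hneg : ∀ (a : V') (w : G.Walk a a), walkSign σ w = -1 → m + 4 ≤ w.length ∧
        (w.length + (m + 4)) % 2 = 0 := by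
      intro a w hw
      obtain ⟨b, w', t, h1, h2, ⟨h3, -, -⟩ | ⟨-, h4, h5⟩⟩ := hcl a w
      · omega
      · have a1 := hmin b w' h4
        have a2 := hpar b w' h4
        omega
    obtain ⟨ε, hε, hed⟩ := eps_exists (by omega) hσ hpmG hconn hK hpos hneg hex
    exact quot_hom hσ hpmG hconn hK ε hε hed B π hsymm hpm hSP hB
  · -- all closed walks are positive of even length
    have hall : ∀ (a : V') (w : G.Walk a a), walkSign σ w = 1 := by
      intro a w
      rcases ws_pm hpmG w with h | h
      · exact h
      · exact absurd ⟨a, w, h⟩ hex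
    obtain ⟨b, -⟩ := hcl r SimpleGraph.Walk.nil
    have hw : ∀ v, Nonempty (G.Walk r v) := fun v => hconn.preconnected r v
    let ww : ∀ v, G.Walk r v := fun v => (hw v).some
    let F : G →g EDCsg B π hsymm :=
      { toFun := fun u => (b, decide ((ww u).length % 2 = 0))
        map_rel' := by
          intro u v huv
          left
          refine ⟨rfl, ?_⟩
          intro hd
          have h1 := hpos r ((ww u).append (SimpleGraph.Walk.cons huv (ww v).reverse)) (hall _ _)
          rw [SimpleGraph.Walk.length_append, SimpleGraph.Walk.length_cons,
            SimpleGraph.Walk.length_reverse] at h1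
          have h2 : ((ww u).length % 2 = 0 ↔ (ww v).length % 2 = 0) := decide_eq_decide.1 hd
          omega }
    refine ⟨F, ?_⟩
    have hF : ∀ {u v : V'} (w : G.Walk u v), walkSign edcSign (w.map F) = (-1) ^ w.length := by
      intro u v w
      induction w with
      | nil => rw [SimpleGraph.Walk.map_nil, ws_nil]; rfl
      | @cons x y z hxy w ih =>
        have e : edcSign (F x) (F y) = -1 := if_pos rfl
        rw [SimpleGraph.Walk.map_cons, ws_cons, ih, SimpleGraph.Walk.length_cons, pow_succ, e]
        ring
    intro a w
    rw [hF, hall, (Nat.even_iff.2 (hpos a w (hall a w))).neg_one_pow]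

end SignedPaper
end

section
/- For every integer k ≥ 2, the Extended Double Cover EDC(SPC(k)) is isomorphic to SPC(k+1) as a signed graph; that is, there exists a bijection from the vertex set of EDC(SPC(k)) to ℤ₂^{k+1} that maps edges to edges, non-edges to non-edges, and preserves the sign of every edge. -/
open SimpleGraph

namespace SignedPaper

variable {V : Type*} {W : Type*}

def bz (b : Bool) : ZMod 2 := if b then 0 else 1

/-- The vertex bijection: `v⁺ ↦ (0, v)` and `v⁻ ↦ (1, v + 1)`. -/
def edcEquiv (k : ℕ) : ((Fin k → ZMod 2) × Bool) ≃ (Fin (k + 1) → ZMod 2) where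
  toFun p := Fin.cons (bz p.2) (fun i => p.1 i + bz p.2)
  invFun w := (fun i => w i.succ + w 0, decide (w 0 = 0))
  left_inv := by
    rintro ⟨v, b⟩
    have h2 : ∀ a c : ZMod 2, a + c + c = a := by decide
    ext i
    · simp [h2]
    · cases b <;> simp [bz]
  right_inv := by
    intro w
    have h2 : ∀ a c : ZMod 2, a + c + c = a := by decide
    have h3 : ∀ a : ZMod 2, bz (decide (a = 0)) = a := by decide
    funext i
    refine Fin.cases ?_ (fun j => ?_) i
    · simp [h3]
    · simp [h3, h2]

lemma hammingDist_cons {k : ℕ} (a b : ZMod 2) (x y : Fin k → ZMod 2) :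
    hammingDist (Fin.cons a x : Fin (k + 1) → ZMod 2) (Fin.cons b y)
      = (if a = b then 0 else 1) + hammingDist x y := by
  simp only [hammingDist, Finset.card_filter, Fin.sum_univ_succ, Fin.cons_zero, Fin.cons_succ]
  congr 1
  by_cases h : a = b <;> simp [h]

lemma hammingDist_compl {k : ℕ} (x y : Fin k → ZMod 2) (c d : ZMod 2) (h : c ≠ d) :
    hammingDist (fun i => x i + c) (fun i => y i + d) + hammingDist x y = k := by
  have h3 : ∀ a b c d : ZMod 2, c ≠ d → (a + c ≠ b + d ↔ ¬ (a ≠ b)) := by decide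
  simp only [hammingDist]
  rw [Finset.filter_congr (fun i _ => h3 (x i) (y i) c d h), add_comm,
    Finset.card_filter_add_card_filter_not]
  simp

lemma edcEquiv_dist_same {k : ℕ} (x y : Fin k → ZMod 2) (b : Bool) :
    hammingDist (edcEquiv k (x, b)) (edcEquiv k (y, b)) = hammingDist x y := by
  simp only [edcEquiv, Equiv.coe_fn_mk]
  rw [hammingDist_cons]
  simp [hammingDist]

lemma edcEquiv_dist_diff {k : ℕ} (x y : Fin k → ZMod 2) (b c : Bool) (h : b ≠ c) :
    hammingDist (edcEquiv k (x, b)) (edcEquiv k (y, c)) + hammingDist x y = k + 1 := by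
  have hb : ∀ b c : Bool, b ≠ c → bz b ≠ bz c := by decide
  have := hammingDist_compl x y (bz b) (bz c) (hb b c h)
  simp only [edcEquiv, Equiv.coe_fn_mk]
  rw [hammingDist_cons, if_neg (hb b c h)]
  omega

/-- for `k ≥ 2`, `EDC(SPC(k))` is isomorphic to `SPC(k+1)` as a
signed graph: there is a bijection on vertices mapping edges to edges, non-edges to
non-edges, and preserving the sign of every edge. -/
theorem EDC_SPC (k : ℕ) (hk : 2 ≤ k) :
    ∃ e : ((Fin k → ZMod 2) × Bool) ≃ (Fin (k + 1) → ZMod 2),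
      (∀ x y, (EDCsg (spcGraph k) (spcSign k) (spcSign_symm k)).Adj x y ↔
        (spcGraph (k + 1)).Adj (e x) (e y)) ∧
      (∀ x y, (EDCsg (spcGraph k) (spcSign k) (spcSign_symm k)).Adj x y →
        spcSign (k + 1) (e x) (e y) = edcSign x y) := by
  have key : ∀ x y : (Fin k → ZMod 2) × Bool,
      ((EDCsg (spcGraph k) (spcSign k) (spcSign_symm k)).Adj x y ↔
        (spcGraph (k + 1)).Adj (edcEquiv k x) (edcEquiv k y)) ∧
      ((EDCsg (spcGraph k) (spcSign k) (spcSign_symm k)).Adj x y →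
        spcSign (k + 1) (edcEquiv k x) (edcEquiv k y) = edcSign x y) := by
    rintro ⟨x, b⟩ ⟨y, c⟩
    have hle : hammingDist x y ≤ k := by
      simpa using hammingDist_le_card_fintype (x := x) (y := y)
    have hs : 0 < spcSign k x y ↔ hammingDist x y ≠ k := by
      unfold spcSign; split_ifs with h <;> simp [h]
    simp only [EDCsg, spcGraph, edcSign, hs]
    simp only [spcSign]
    have e1 : x = y ↔ hammingDist x y = 0 := hammingDist_eq_zero.symm
    have e2 : edcEquiv k (x, b) = edcEquiv k (y, c) ↔
      hammingDist (edcEquiv k (x, b)) (edcEquiv k (y, c)) = 0 := hammingDist_eq_zero.symm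
    simp only [ne_eq, e1, e2]
    by_cases h : b = c
    · subst h
      rw [edcEquiv_dist_same]
      generalize hammingDist x y = n at *
      simp only [not_true_eq_false, and_false, false_or, true_iff]
      refine ⟨by omega, fun h => ?_⟩
      rw [if_neg (by omega), if_neg (by omega)]
    · have hd := edcEquiv_dist_diff x y b c h
      generalize hammingDist x y = n at *
      generalize hammingDist (edcEquiv k (x, b)) (edcEquiv k (y, c)) = m at *
      simp only [h, not_false_eq_true, and_true, false_iff, not_not]
      refine ⟨by omega, fun _ => ?_⟩
      by_cases hn : n = 0
      · rw [if_pos (by omega), if_pos hn]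
      · rw [if_neg (by omega), if_neg hn]
  exact ⟨edcEquiv k, fun x y => (key x y).1, fun x y => (key x y).2⟩

end SignedPaper
end
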